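/- arXiv:1402.2526 — 3 statements merged into one kernel-verified Lean document; each statement's English description precedes it below -/
import Mathlib

section
/- Intermediate relative-energy inequality (equation (w6), Step 1 of the proof of Proposition 3.1): Let (ρ,u) be a bounded admissible weak solution of the Riemann problem on (0,T)×Ω and let V ∈ C¹([0,T]×Ω̄;ℝ²) (write V = (V¹,V²)). Then for a.a. τ ∈ (0,T): ∫_Ω [½ρ|u−V|² + H(ρ)](τ,·) dx − ∫_Ω [½ρ₀|u₀−V(0,·)|² + H(ρ₀)] dx + ∫₀^τ∫_{𝕋¹} [H(ρ_R)u¹_R − H(ρ_L)u¹_L] dx₂ dt + ∫₀^τ∫_{𝕋¹} [½ρ_R|u_R − V(t,a,x₂)|² u¹_R − ½ρ_L|u_L − V(t,−a,x₂)|² u¹_L] dx₂ dt + ∫₀^τ∫_{𝕋¹} [p(ρ_R)(u¹_R − V¹(t,a,x₂)) − p(ρ_L)(u¹_L − V¹(t,−a,x₂))] dx₂ dt ≤ ∫₀^τ∫_Ω [ρ(∂_tV + u·∇_xV)·(V − u) − p(ρ) div_xV] dx dt. -/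
/-!
The inequality is the linear combination "energy inequality + continuity equation tested
with `½|V|²` − momentum equation tested with `V`". Since
`½ρ|u|² − ρ u·V + ½ρ|V|² = ½ρ|u−V|²`, the time-slice terms and the boundary fluxes combine to
the left-hand side, and the chain rule `∂(½|V|²) = V·∂V` turns the space-time terms into the
right-hand side. What remains is to justify the linearity of the integrals: every quantity
involved is essentially bounded on a set of finite measure. This is clear for the velocity and
for `V` and its derivatives, and for `p(ρ)` by continuity of `p` on `[0,∞)`; the vacuum `ρ = 0` needs an argument only for the potential
`H(ρ)`, where convexity and `p(0) = 0` give `p(z) ≤ z p(1)` on `(0,1]`, hence `|H| ≤ p(1)`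
there (`exists_bound_Hfun`).
-/

open MeasureTheory Set

noncomputable section

/-- The pressure potential `H(ρ) = ρ ∫_1^ρ p(z)/z² dz`. -/
def Hfun (p : ℝ → ℝ) (ρ : ℝ) : ℝ := ρ * ∫ z in (1:ℝ)..ρ, p z / z ^ 2

/-- Partial derivative of a scalar field on `ℝ²` with respect to the first variable. -/
def pd1 (f : ℝ × ℝ → ℝ) (x : ℝ × ℝ) : ℝ := deriv (fun y => f (y, x.2)) x.1

/-- Partial derivative of a scalar field on `ℝ²` with respect to the second variable. -/
def pd2 (f : ℝ × ℝ → ℝ) (x : ℝ × ℝ) : ℝ := deriv (fun y => f (x.1, y)) x.2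

/-- Time derivative of a time-dependent scalar field. -/
def pdt (f : ℝ → ℝ × ℝ → ℝ) (t : ℝ) (x : ℝ × ℝ) : ℝ := deriv (fun s => f s x) t

/-- Euclidean dot product on `ℝ²`. -/
def dot (v w : ℝ × ℝ) : ℝ := v.1 * w.1 + v.2 * w.2

/-- The spatial domain `Ω = (−a,a) × 𝕋¹`, the torus being realized as the periodic
cell `(0,1)` in the `x₂` variable. -/
def Dom (a : ℝ) : Set (ℝ × ℝ) := Ioo (-a) a ×ˢ Ioo (0:ℝ) 1

/-- Riemann-type initial data: the value `L` for `x₁ ≤ 0` and `R` for `x₁ > 0`. -/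
def riem (L R : ℝ) (x : ℝ × ℝ) : ℝ := if x.1 ≤ 0 then L else R

/-- Hypotheses on the pressure: `p ∈ C[0,∞) ∩ C¹(0,∞)`, `p(0) = 0`, `p' > 0` on `(0,∞)`,
`p` convex on `[0,∞)`. -/
def PressureOK (p : ℝ → ℝ) : Prop :=
  ContinuousOn p (Ici 0) ∧ ContDiffOn ℝ 1 p (Ioi 0) ∧ p 0 = 0 ∧
    (∀ ρ : ℝ, 0 < ρ → 0 < deriv p ρ) ∧ ConvexOn ℝ (Ici 0) p

/-- A scalar test function: `C¹` on `[0,T] × Ω̄` (realized as a globally `C¹` function) and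
`1`-periodic in the `x₂` variable. -/
def IsTest (φ : ℝ → ℝ × ℝ → ℝ) : Prop :=
  ContDiff ℝ 1 (Function.uncurry φ) ∧ ∀ t x₁ x₂, φ t (x₁, x₂ + 1) = φ t (x₁, x₂)

/-- A vector test function: `C¹` on `[0,T] × Ω̄` (realized as a globally `C¹` function) and
`1`-periodic in the `x₂` variable. -/
def IsTestV (φ : ℝ → ℝ × ℝ → ℝ × ℝ) : Prop :=
  ContDiff ℝ 1 (Function.uncurry φ) ∧ ∀ t x₁ x₂, φ t (x₁, x₂ + 1) = φ t (x₁, x₂)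

/-- A bounded admissible weak solution of the Riemann problem for the compressible Euler
system on `(0,T) × Ω`, with Riemann data `(ρ_L, u¹_L)`, `(ρ_R, u¹_R)`: the weak formulation
(w1) of the equation of continuity, (w2) of the momentum equation and the energy
inequality (w3), with the prescribed initial state and boundary fluxes. -/
structure IsAdmissibleWeakSol (T a : ℝ) (p : ℝ → ℝ) (ρL ρR u1L u1R : ℝ)
    (ρ : ℝ → ℝ × ℝ → ℝ) (u : ℝ → ℝ × ℝ → ℝ × ℝ) : Prop where
  meas_ρ : Measurable (Function.uncurry ρ)
  meas_u : Measurable (Function.uncurry u)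
  bdd : ∃ C : ℝ, ∀ t x, |ρ t x| ≤ C ∧ ‖u t x‖ ≤ C
  nonneg : ∀ᵐ z ∂(volume.restrict (Ioo 0 T ×ˢ Dom a) : Measure (ℝ × (ℝ × ℝ))),
    0 ≤ ρ z.1 z.2
  w1 : ∀ᵐ τ ∂(volume.restrict (Ioo 0 T)), ∀ φ : ℝ → ℝ × ℝ → ℝ, IsTest φ →
    (∫ x in Dom a, (ρ τ x * φ τ x - riem ρL ρR x * φ 0 x)) +
      (∫ t in (0:ℝ)..τ, ∫ s in (0:ℝ)..1,
        (ρR * u1R * φ t (a, s) - ρL * u1L * φ t (-a, s)))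
    = ∫ t in (0:ℝ)..τ, ∫ x in Dom a,
        (ρ t x * pdt φ t x
          + ρ t x * ((u t x).1 * pd1 (φ t) x + (u t x).2 * pd2 (φ t) x))
  w2 : ∀ᵐ τ ∂(volume.restrict (Ioo 0 T)), ∀ φ : ℝ → ℝ × ℝ → ℝ × ℝ, IsTestV φ →
    (∫ x in Dom a, (ρ τ x * dot (u τ x) (φ τ x)
        - riem ρL ρR x * dot (riem u1L u1R x, 0) (φ 0 x))) +
      (∫ t in (0:ℝ)..τ, ∫ s in (0:ℝ)..1,
        (ρR * u1R * dot (u1R, 0) (φ t (a, s)) - ρL * u1L * dot (u1L, 0) (φ t (-a, s)))) +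
      (∫ t in (0:ℝ)..τ, ∫ s in (0:ℝ)..1,
        (p ρR * (φ t (a, s)).1 - p ρL * (φ t (-a, s)).1))
    = ∫ t in (0:ℝ)..τ, ∫ x in Dom a,
        (ρ t x * dot (u t x) (deriv (fun τ' => φ τ' x) t)
          + ρ t x * ((u t x).1 * (u t x).1 * pd1 (fun y => (φ t y).1) x
            + (u t x).2 * (u t x).1 * pd2 (fun y => (φ t y).1) x
            + (u t x).1 * (u t x).2 * pd1 (fun y => (φ t y).2) x
            + (u t x).2 * (u t x).2 * pd2 (fun y => (φ t y).2) x)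
          + p (ρ t x) * (pd1 (fun y => (φ t y).1) x + pd2 (fun y => (φ t y).2) x))
  w3 : ∀ᵐ τ ∂(volume.restrict (Ioo 0 T)),
    (∫ x in Dom a, (1 / 2 * ρ τ x * dot (u τ x) (u τ x) + Hfun p (ρ τ x))) -
      (∫ x in Dom a, (1 / 2 * riem ρL ρR x * (riem u1L u1R x) ^ 2
        + Hfun p (riem ρL ρR x))) +
      (∫ _t in (0:ℝ)..τ, ∫ _s in (0:ℝ)..1,
        ((1 / 2 * ρR * u1R ^ 2 + Hfun p ρR + p ρR) * u1R
          - (1 / 2 * ρL * u1L ^ 2 + Hfun p ρL + p ρL) * u1L)) ≤ 0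

/-! ### Essentially bounded functions -/

lemma memLp_top_mul {α : Type*} [MeasurableSpace α] {μ : Measure α} {f g : α → ℝ}
    (hf : MemLp f ⊤ μ) (hg : MemLp g ⊤ μ) : MemLp (fun x => f x * g x) ⊤ μ :=
  MemLp.mul' (p := ⊤) (q := ⊤) hg hf

lemma memLp_top_add {α : Type*} [MeasurableSpace α] {μ : Measure α} {f g : α → ℝ}
    (hf : MemLp f ⊤ μ) (hg : MemLp g ⊤ μ) : MemLp (fun x => f x + g x) ⊤ μ := hf.add hg

lemma memLp_top_sub {α : Type*} [MeasurableSpace α] {μ : Measure α} {f g : α → ℝ}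
    (hf : MemLp f ⊤ μ) (hg : MemLp g ⊤ μ) : MemLp (fun x => f x - g x) ⊤ μ := hf.sub hg

lemma memLp_top_of_compact {α : Type*} [MeasurableSpace α] [TopologicalSpace α]
    [OpensMeasurableSpace α] {μ : Measure α} {f : α → ℝ} (hf : Continuous f)
    {K : Set α} (hK : IsCompact K) (hμ : ∀ᵐ x ∂μ, x ∈ K) : MemLp f ⊤ μ := by
  obtain ⟨C, hC⟩ := hK.exists_bound_of_continuousOn hf.continuousOn
  exact memLp_top_of_bound hf.measurable.aestronglyMeasurable C
    (hμ.mono fun x hx => hC x hx)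

/-! ### The pressure and its potential -/

lemma continuous_pressure_max {p : ℝ → ℝ} (hp : PressureOK p) :
    Continuous fun r => p (max r 0) :=
  hp.1.comp_continuous (by fun_prop) fun r => le_max_right r 0

/-- `p(ρ)` is essentially bounded if `ρ` is bounded and nonnegative almost everywhere; the
values of `p` on the negative axis are arbitrary and are replaced using `max ρ 0`. -/
lemma memLp_top_pressure {α : Type*} [MeasurableSpace α] {μ : Measure α} {p : ℝ → ℝ}
    (hp : PressureOK p) {r : α → ℝ} (hr : Measurable r) {C : ℝ} (hC : ∀ x, |r x| ≤ C)
    (h0 : ∀ᵐ x ∂μ, 0 ≤ r x) : MemLp (fun x => p (r x)) ⊤ μ := by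
  have hc := continuous_pressure_max hp
  obtain ⟨K, hK⟩ := (isCompact_Icc (a := -C) (b := C)).exists_bound_of_continuousOn
    hc.continuousOn
  have h : MemLp (fun x => p (max (r x) 0)) ⊤ μ :=
    memLp_top_of_bound (hc.measurable.comp hr).aestronglyMeasurable K
      (Filter.Eventually.of_forall fun x => hK _ (abs_le.mp (hC x)))
  refine (memLp_congr_ae ?_).mp h
  filter_upwards [h0] with x hx
  rw [max_eq_left hx]

lemma continuousOn_Hfun {p : ℝ → ℝ} (hp : PressureOK p) : ContinuousOn (Hfun p) (Ioi 0) := by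
  have hf : ContinuousOn (fun z => p z / z ^ 2) (Ioi 0) :=
    (hp.1.mono Ioi_subset_Ici_self).div (by fun_prop) fun z hz => pow_ne_zero 2 (ne_of_gt hz)
  intro r hr
  have hr' : (0:ℝ) < r := hr
  have hsub : uIcc 1 r ⊆ Ioi 0 := fun z hz => lt_of_lt_of_le (lt_min one_pos hr') hz.1
  have hd : HasDerivAt (fun r => ∫ z in (1:ℝ)..r, p z / z ^ 2) (p r / r ^ 2) r :=
    intervalIntegral.integral_hasDerivAt_right
      (hf.mono hsub).intervalIntegrable
      (hf.stronglyMeasurableAtFilter isOpen_Ioi r hr)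
      (hf.continuousAt (Ioi_mem_nhds hr'))
  exact (continuousAt_id.mul hd.continuousAt).continuousWithinAt

/-- The potential is bounded on bounded subsets of `[0,∞)`, including near the vacuum, although
the integral defining it may diverge logarithmically as `ρ → 0`. -/
lemma exists_bound_Hfun {p : ℝ → ℝ} (hp : PressureOK p) (C : ℝ) :
    ∃ K, ∀ r, 0 ≤ r → r ≤ C → |Hfun p r| ≤ K := by
  obtain ⟨K, hK⟩ := (isCompact_Icc (a := (1:ℝ)) (b := C)).exists_bound_of_continuousOn
    ((continuousOn_Hfun hp).mono fun z hz => lt_of_lt_of_le one_pos hz.1)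
  have hKm : ∀ r ∈ Icc (0:ℝ) 1, |p r| ≤ r * |p 1| := by
    intro r hr
    have h := hp.2.2.2.2.2 (mem_Ici.mpr le_rfl) (mem_Ici.mpr zero_le_one)
      (sub_nonneg.mpr hr.2) hr.1 (by ring)
    simp only [smul_eq_mul, hp.2.2.1, mul_zero, mul_one, zero_add] at h
    have hmono : MonotoneOn p (Ici 0) := monotoneOn_of_deriv_nonneg (convex_Ici 0) hp.1
      (by rw [interior_Ici]; exact hp.2.1.differentiableOn one_ne_zero)
      (by rw [interior_Ici]; exact fun x hx => (hp.2.2.2.1 x hx).le)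
    have h0 : 0 ≤ p r := hp.2.2.1 ▸ hmono (mem_Ici.mpr le_rfl) (mem_Ici.mpr hr.1) hr.1
    rw [abs_of_nonneg h0]
    exact h.trans (mul_le_mul_of_nonneg_left (le_abs_self _) hr.1)
  refine ⟨max K |p 1|, fun r h0 hC => ?_⟩
  rcases le_total 1 r with h1 | h1
  · exact (hK r ⟨h1, hC⟩).trans (le_max_left _ _)
  refine le_trans ?_ (le_max_right _ _)
  rcases h0.eq_or_lt with rfl | h0
  · simp [Hfun]
  have hb : ‖∫ z in (1:ℝ)..r, p z / z ^ 2‖ ≤ |p 1| / r * |r - 1| := by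
    refine intervalIntegral.norm_integral_le_of_norm_le_const fun z hz => ?_
    rw [uIoc_of_ge h1] at hz
    have hz0 : 0 < z := h0.trans hz.1
    have h2 := hKm z ⟨hz0.le, hz.2⟩
    rw [Real.norm_eq_abs, abs_div, abs_of_pos (pow_pos hz0 2), div_le_div_iff₀ (by positivity) h0]
    calc |p z| * r ≤ (z * |p 1|) * z := by gcongr; exact hz.1.le
      _ = |p 1| * z ^ 2 := by ring
  rw [Hfun, abs_mul, abs_of_pos h0]
  calc r * |∫ z in (1:ℝ)..r, p z / z ^ 2| ≤ r * (|p 1| / r * |r - 1|) := by gcongr; exact hb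
    _ = |p 1| * |r - 1| := by field_simp
    _ ≤ |p 1| * 1 := by
        gcongr
        rw [abs_le]; constructor <;> linarith
    _ = |p 1| := mul_one _

lemma memLp_top_Hfun {α : Type*} [MeasurableSpace α] {μ : Measure α} {p : ℝ → ℝ}
    (hp : PressureOK p) {r : α → ℝ} (hr : Measurable r) {C : ℝ} (hC : ∀ x, |r x| ≤ C)
    (h0 : ∀ᵐ x ∂μ, 0 ≤ r x) : MemLp (fun x => Hfun p (r x)) ⊤ μ := by
  obtain ⟨K, hK⟩ := exists_bound_Hfun hp C
  have hm : Measurable ((Ioi (0:ℝ)).piecewise (Hfun p) fun _ => 0) :=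
    (continuousOn_Hfun hp).measurable_piecewise continuousOn_const measurableSet_Ioi
  refine memLp_top_of_bound ⟨_, (hm.comp hr).stronglyMeasurable, ?_⟩ K ?_
  · filter_upwards [h0] with x hx
    rcases hx.eq_or_lt with hx | hx
    · simp [← hx, Hfun]
    · simp [hx]
  · filter_upwards [h0] with x hx
    exact hK _ hx (abs_le.mp (hC x)).2

/-! ### The test field `V` and the test function `½|V|²` -/

lemma hasDerivAt_time {V : ℝ → ℝ × ℝ → ℝ × ℝ} (hV : ContDiff ℝ 1 (Function.uncurry V))
    (t : ℝ) (x : ℝ × ℝ) :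
    HasDerivAt (fun s => V s x) (fderiv ℝ (Function.uncurry V) (t, x) (1, 0)) t := by
  have h := (hV.differentiable one_ne_zero (t, x)).hasFDerivAt
  exact h.comp_hasDerivAt t ((hasDerivAt_id t).prodMk (hasDerivAt_const t x))

lemma hasDerivAt_x1 {V : ℝ → ℝ × ℝ → ℝ × ℝ} (hV : ContDiff ℝ 1 (Function.uncurry V))
    (t : ℝ) (x : ℝ × ℝ) :
    HasDerivAt (fun y => V t (y, x.2))
      (fderiv ℝ (Function.uncurry V) (t, x) (0, (1, 0))) x.1 := by
  have h := (hV.differentiable one_ne_zero (t, x)).hasFDerivAt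
  exact h.comp_hasDerivAt x.1 ((hasDerivAt_const x.1 t).prodMk
    ((hasDerivAt_id x.1).prodMk (hasDerivAt_const x.1 x.2)))

lemma hasDerivAt_x2 {V : ℝ → ℝ × ℝ → ℝ × ℝ} (hV : ContDiff ℝ 1 (Function.uncurry V))
    (t : ℝ) (x : ℝ × ℝ) :
    HasDerivAt (fun y => V t (x.1, y))
      (fderiv ℝ (Function.uncurry V) (t, x) (0, (0, 1))) x.2 := by
  have h := (hV.differentiable one_ne_zero (t, x)).hasFDerivAt
  exact h.comp_hasDerivAt x.2 ((hasDerivAt_const x.2 t).prodMk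
    ((hasDerivAt_const x.2 x.1).prodMk (hasDerivAt_id x.2)))

lemma hasDerivAt_fst {g : ℝ → ℝ × ℝ} {d : ℝ × ℝ} {s : ℝ} (h : HasDerivAt g d s) :
    HasDerivAt (fun y => (g y).1) d.1 s :=
  (ContinuousLinearMap.fst ℝ ℝ ℝ).hasFDerivAt.comp_hasDerivAt s h

lemma hasDerivAt_snd {g : ℝ → ℝ × ℝ} {d : ℝ × ℝ} {s : ℝ} (h : HasDerivAt g d s) :
    HasDerivAt (fun y => (g y).2) d.2 s :=
  (ContinuousLinearMap.snd ℝ ℝ ℝ).hasFDerivAt.comp_hasDerivAt s h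

lemma hasDerivAt_half_sq {g : ℝ → ℝ × ℝ} {d : ℝ × ℝ} {s : ℝ} (h : HasDerivAt g d s) :
    HasDerivAt (fun y => 1 / 2 * dot (g y) (g y)) (dot (g s) d) s := by
  have h1 := hasDerivAt_fst h
  have h2 := hasDerivAt_snd h
  refine (((h1.mul h1).add (h2.mul h2)).const_mul (1 / 2)).congr_deriv ?_
  simp only [dot]; ring

lemma isTest_half_sq {V : ℝ → ℝ × ℝ → ℝ × ℝ} (hV : IsTestV V) :
    IsTest fun t x => 1 / 2 * dot (V t x) (V t x) := by
  refine ⟨?_, fun t x₁ x₂ => by simp only [hV.2]⟩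
  have h1 := hV.1.fst
  have h2 := hV.1.snd
  exact contDiff_const.mul ((h1.mul h1).add (h2.mul h2))

/-! ### Linearity of the iterated integrals -/

lemma dom_subset (a : ℝ) : Dom a ⊆ Icc (-a) a ×ˢ Icc (0:ℝ) 1 :=
  prod_mono Ioo_subset_Icc_self Ioo_subset_Icc_self

lemma measurableSet_dom (a : ℝ) : MeasurableSet (Dom a) :=
  measurableSet_Ioo.prod measurableSet_Ioo

lemma isFiniteMeasure_dom (a : ℝ) : IsFiniteMeasure (volume.restrict (Dom a)) := by
  refine ⟨?_⟩
  rw [Measure.restrict_apply_univ]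
  exact (measure_mono (dom_subset a)).trans_lt (isCompact_Icc.prod isCompact_Icc).measure_lt_top

lemma iterated_eq_prod {a τ : ℝ} (hτ : 0 ≤ τ) {F : ℝ × (ℝ × ℝ) → ℝ}
    (hF : Integrable F
      ((volume.restrict (Ioc 0 τ)).prod (volume.restrict (Dom a)))) :
    ∫ t in (0:ℝ)..τ, ∫ x in Dom a, F (t, x) =
      ∫ z, F z ∂((volume.restrict (Ioc 0 τ)).prod (volume.restrict (Dom a))) := by
  have := isFiniteMeasure_dom a
  rw [intervalIntegral.integral_of_le hτ, integral_prod _ hF]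

lemma boundary_add {F G : ℝ → ℝ → ℝ} (hF : Continuous (Function.uncurry F))
    (hG : Continuous (Function.uncurry G)) (τ : ℝ) :
    (∫ t in (0:ℝ)..τ, ∫ s in (0:ℝ)..1, (F t s + G t s)) =
      (∫ t in (0:ℝ)..τ, ∫ s in (0:ℝ)..1, F t s) + ∫ t in (0:ℝ)..τ, ∫ s in (0:ℝ)..1, G t s := by
  rw [← intervalIntegral.integral_add]
  · congr 1; ext t
    exact intervalIntegral.integral_add
      ((hF.comp (by fun_prop : Continuous fun s : ℝ => (t, s))).intervalIntegrable _ _)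
      ((hG.comp (by fun_prop : Continuous fun s : ℝ => (t, s))).intervalIntegrable _ _)
  · exact (intervalIntegral.continuous_parametric_intervalIntegral_of_continuous' hF
      0 1).intervalIntegrable _ _
  · exact (intervalIntegral.continuous_parametric_intervalIntegral_of_continuous' hG
      0 1).intervalIntegrable _ _

/-- The boundary fluxes of the energy, of the continuity equation tested with `½|V|²` and of the
momentum equation tested with `V` combine to those of the relative energy. -/
lemma boundary_identity (a τ ρL ρR uL uR hL hR pL pR : ℝ) {V : ℝ → ℝ × ℝ → ℝ × ℝ}
    (hV : Continuous (Function.uncurry V)) :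
    (∫ _t in (0:ℝ)..τ, ∫ _s in (0:ℝ)..1, (hR * uR - hL * uL)) +
      (∫ t in (0:ℝ)..τ, ∫ s in (0:ℝ)..1,
        (1 / 2 * ρR * dot ((uR, 0) - V t (a, s)) ((uR, 0) - V t (a, s)) * uR
          - 1 / 2 * ρL * dot ((uL, 0) - V t (-a, s)) ((uL, 0) - V t (-a, s)) * uL)) +
      (∫ t in (0:ℝ)..τ, ∫ s in (0:ℝ)..1,
        (pR * (uR - (V t (a, s)).1) - pL * (uL - (V t (-a, s)).1))) +
      (∫ t in (0:ℝ)..τ, ∫ s in (0:ℝ)..1,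
        (ρR * uR * dot (uR, 0) (V t (a, s)) - ρL * uL * dot (uL, 0) (V t (-a, s)))) +
      (∫ t in (0:ℝ)..τ, ∫ s in (0:ℝ)..1,
        (pR * (V t (a, s)).1 - pL * (V t (-a, s)).1)) =
    (∫ _t in (0:ℝ)..τ, ∫ _s in (0:ℝ)..1,
        ((1 / 2 * ρR * uR ^ 2 + hR + pR) * uR - (1 / 2 * ρL * uL ^ 2 + hL + pL) * uL)) +
      (∫ t in (0:ℝ)..τ, ∫ s in (0:ℝ)..1,
        (ρR * uR * (1 / 2 * dot (V t (a, s)) (V t (a, s)))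
          - ρL * uL * (1 / 2 * dot (V t (-a, s)) (V t (-a, s))))) := by
  have h1 : Continuous fun z : ℝ × ℝ => V z.1 (a, z.2) :=
    hV.comp (by fun_prop : Continuous fun z : ℝ × ℝ => (z.1, (a, z.2)))
  have h2 : Continuous fun z : ℝ × ℝ => V z.1 (-a, z.2) :=
    hV.comp (by fun_prop : Continuous fun z : ℝ × ℝ => (z.1, (-a, z.2)))
  simp only [dot, Prod.fst_sub, Prod.snd_sub]
  rw [← boundary_add, ← boundary_add, ← boundary_add, ← boundary_add, ← boundary_add]
  · congr 1; ext t; congr 1; ext s; ring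
  all_goals
    simp only [Function.uncurry_def]
    fun_prop

/-- The time-slice terms combine by `½|u−V|² = ½|u|² + ½|V|² − u·V`; the subscript `0` refers to
the initial state. -/
lemma slice_identity {α : Type*} [MeasurableSpace α] {μ : Measure α} [IsFiniteMeasure μ]
    {r h r₀ w₀ h₀ : α → ℝ} {u v v₀ : α → ℝ × ℝ}
    (hr : MemLp r ⊤ μ) (hh : MemLp h ⊤ μ) (hr0 : MemLp r₀ ⊤ μ) (hw0 : MemLp w₀ ⊤ μ)
    (hh0 : MemLp h₀ ⊤ μ) (hu1 : MemLp (fun x => (u x).1) ⊤ μ) (hu2 : MemLp (fun x => (u x).2) ⊤ μ)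
    (hv1 : MemLp (fun x => (v x).1) ⊤ μ) (hv2 : MemLp (fun x => (v x).2) ⊤ μ)
    (hz1 : MemLp (fun x => (v₀ x).1) ⊤ μ) (hz2 : MemLp (fun x => (v₀ x).2) ⊤ μ) :
    (∫ x, (1 / 2 * r x * dot (u x - v x) (u x - v x) + h x) ∂μ) -
      (∫ x, (1 / 2 * r₀ x * dot ((w₀ x, 0) - v₀ x) ((w₀ x, 0) - v₀ x) + h₀ x) ∂μ) =
    (∫ x, (1 / 2 * r x * dot (u x) (u x) + h x) ∂μ) -
      (∫ x, (1 / 2 * r₀ x * (w₀ x) ^ 2 + h₀ x) ∂μ) +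
      (∫ x, (r x * (1 / 2 * dot (v x) (v x)) - r₀ x * (1 / 2 * dot (v₀ x) (v₀ x))) ∂μ) -
      (∫ x, (r x * dot (u x) (v x) - r₀ x * dot (w₀ x, 0) (v₀ x)) ∂μ) := by
  have hc : ∀ c : ℝ, MemLp (fun _ : α => c) ⊤ μ := fun c => memLp_const c
  simp only [dot, Prod.fst_sub, Prod.snd_sub, sq]
  rw [← integral_sub, ← integral_sub, ← integral_add, ← integral_sub]
  · congr 1; ext x; ring
  all_goals
    refine MemLp.integrable (q := ⊤) le_top ?_
    repeat first
      | assumption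
      | exact hc _
      | with_reducible apply memLp_top_add
      | with_reducible apply memLp_top_sub
      | with_reducible apply memLp_top_mul

/-- The chain rule for `½|V|²` turns the difference of the space-time terms of the continuity and
of the momentum equation into the relative-energy remainder. Here `d`, `d₁`, `d₂` stand for the
derivatives of `V` in `t`, `x₁`, `x₂`. -/
lemma bulk_identity {α : Type*} [MeasurableSpace α] {μ : Measure α} [IsFiniteMeasure μ]
    {r q : α → ℝ} {u v d d₁ d₂ : α → ℝ × ℝ} (hr : MemLp r ⊤ μ) (hq : MemLp q ⊤ μ)
    (hu1 : MemLp (fun x => (u x).1) ⊤ μ) (hu2 : MemLp (fun x => (u x).2) ⊤ μ)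
    (hv1 : MemLp (fun x => (v x).1) ⊤ μ) (hv2 : MemLp (fun x => (v x).2) ⊤ μ)
    (hd1 : MemLp (fun x => (d x).1) ⊤ μ) (hd2 : MemLp (fun x => (d x).2) ⊤ μ)
    (h11 : MemLp (fun x => (d₁ x).1) ⊤ μ) (h12 : MemLp (fun x => (d₁ x).2) ⊤ μ)
    (h21 : MemLp (fun x => (d₂ x).1) ⊤ μ) (h22 : MemLp (fun x => (d₂ x).2) ⊤ μ) :
    Integrable (fun x => r x * dot (v x) (d x)
      + r x * ((u x).1 * dot (v x) (d₁ x) + (u x).2 * dot (v x) (d₂ x))) μ ∧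
    Integrable (fun x => r x * dot (u x) (d x)
      + r x * ((u x).1 * (u x).1 * (d₁ x).1 + (u x).2 * (u x).1 * (d₂ x).1
        + (u x).1 * (u x).2 * (d₁ x).2 + (u x).2 * (u x).2 * (d₂ x).2)
      + q x * ((d₁ x).1 + (d₂ x).2)) μ ∧
    Integrable (fun x => r x * (((d x).1 + (u x).1 * (d₁ x).1 + (u x).2 * (d₂ x).1)
          * ((v x).1 - (u x).1)
        + ((d x).2 + (u x).1 * (d₁ x).2 + (u x).2 * (d₂ x).2) * ((v x).2 - (u x).2))
      - q x * ((d₁ x).1 + (d₂ x).2)) μ ∧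
    (∫ x, (r x * (((d x).1 + (u x).1 * (d₁ x).1 + (u x).2 * (d₂ x).1)
          * ((v x).1 - (u x).1)
        + ((d x).2 + (u x).1 * (d₁ x).2 + (u x).2 * (d₂ x).2) * ((v x).2 - (u x).2))
      - q x * ((d₁ x).1 + (d₂ x).2)) ∂μ) =
    (∫ x, (r x * dot (v x) (d x)
      + r x * ((u x).1 * dot (v x) (d₁ x) + (u x).2 * dot (v x) (d₂ x))) ∂μ) -
    (∫ x, (r x * dot (u x) (d x)
      + r x * ((u x).1 * (u x).1 * (d₁ x).1 + (u x).2 * (u x).1 * (d₂ x).1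
        + (u x).1 * (u x).2 * (d₁ x).2 + (u x).2 * (u x).2 * (d₂ x).2)
      + q x * ((d₁ x).1 + (d₂ x).2)) ∂μ) := by
  simp only [dot]
  rw [← and_assoc, ← and_assoc]
  refine (fun h => ⟨h, ?_⟩) ⟨⟨?_, ?_⟩, ?_⟩
  · rw [← integral_sub h.1.1 h.1.2]
    congr 1; ext x; ring
  all_goals
    refine MemLp.integrable (q := ⊤) le_top ?_
    repeat first
      | assumption
      | with_reducible apply memLp_top_add
      | with_reducible apply memLp_top_sub
      | with_reducible apply memLp_top_mul

/-! ### The relative-energy inequality -/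

/-- Intermediate relative-energy inequality (equation (w6), Step 1 of the proof of
Proposition 3.1): for any bounded admissible weak solution `(ρ,u)` of the Riemann problem and
any `C¹` vector test function `V`, the inequality holds for a.a. `τ ∈ (0,T)`. -/
theorem intermediate_relative_energy_inequality
    (T a : ℝ) (hT : 0 < T) (ha : 0 < a)
    (p : ℝ → ℝ) (hp : PressureOK p)
    (ρL ρR u1L u1R : ℝ) (hρL : 0 < ρL) (hρR : 0 < ρR)
    (ρ : ℝ → ℝ × ℝ → ℝ) (u : ℝ → ℝ × ℝ → ℝ × ℝ)
    (hsol : IsAdmissibleWeakSol T a p ρL ρR u1L u1R ρ u)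
    (V : ℝ → ℝ × ℝ → ℝ × ℝ) (hV : IsTestV V) :
    ∀ᵐ τ ∂(volume.restrict (Ioo 0 T)),
      (∫ x in Dom a,
        (1 / 2 * ρ τ x * dot (u τ x - V τ x) (u τ x - V τ x) + Hfun p (ρ τ x))) -
        (∫ x in Dom a,
          (1 / 2 * riem ρL ρR x * dot ((riem u1L u1R x, 0) - V 0 x)
            ((riem u1L u1R x, 0) - V 0 x) + Hfun p (riem ρL ρR x))) +
        (∫ _t in (0:ℝ)..τ, ∫ _s in (0:ℝ)..1,
          (Hfun p ρR * u1R - Hfun p ρL * u1L)) +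
        (∫ t in (0:ℝ)..τ, ∫ s in (0:ℝ)..1,
          (1 / 2 * ρR * dot ((u1R, 0) - V t (a, s)) ((u1R, 0) - V t (a, s)) * u1R
            - 1 / 2 * ρL * dot ((u1L, 0) - V t (-a, s)) ((u1L, 0) - V t (-a, s)) * u1L)) +
        (∫ t in (0:ℝ)..τ, ∫ s in (0:ℝ)..1,
          (p ρR * (u1R - (V t (a, s)).1) - p ρL * (u1L - (V t (-a, s)).1)))
      ≤ ∫ t in (0:ℝ)..τ, ∫ x in Dom a,
          (ρ t x * (((deriv (fun τ' => V τ' x) t).1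
              + (u t x).1 * pd1 (fun y => (V t y).1) x
              + (u t x).2 * pd2 (fun y => (V t y).1) x) * ((V t x).1 - (u t x).1)
            + ((deriv (fun τ' => V τ' x) t).2
              + (u t x).1 * pd1 (fun y => (V t y).2) x
              + (u t x).2 * pd2 (fun y => (V t y).2) x) * ((V t x).2 - (u t x).2))
          - p (ρ t x) * (pd1 (fun y => (V t y).1) x + pd2 (fun y => (V t y).2) x)) := by
  obtain ⟨C, hC⟩ := hsol.bdd
  have := isFiniteMeasure_dom a
  have hVc : Continuous (Function.uncurry V) := hV.1.continuous
  have hVd : Continuous fun z => fderiv ℝ (Function.uncurry V) z :=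
    hV.1.continuous_fderiv one_ne_zero
  have hns : ∀ᵐ τ ∂(volume.restrict (Ioo 0 T)), ∀ᵐ x ∂(volume.restrict (Dom a)), 0 ≤ ρ τ x := by
    have h := hsol.nonneg
    rw [Measure.volume_eq_prod, ← Measure.prod_restrict] at h
    exact Measure.ae_ae_of_ae_prod h
  filter_upwards [hsol.w1, hsol.w2, hsol.w3, hns, ae_restrict_mem measurableSet_Ioo]
    with τ e1 e2 e3 hnτ hτ
  replace e1 := e1 _ (isTest_half_sq hV)
  replace e2 := e2 V hV
  have hslice : ∀ {f : ℝ × ℝ → ℝ}, Continuous f → MemLp f ⊤ (volume.restrict (Dom a)) :=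
    fun hf => memLp_top_of_compact hf (isCompact_Icc.prod isCompact_Icc)
      ((ae_restrict_mem (measurableSet_dom a)).mono fun x hx => dom_subset a hx)
  have hVs : ∀ t, Continuous (V t) := fun t => hVc.comp (by fun_prop : Continuous fun x => (t, x))
  have hriem : ∀ L R : ℝ, MemLp (riem L R) ⊤ (volume.restrict (Dom a)) := fun L R =>
    memLp_top_of_bound
      (Measurable.ite (measurableSet_le measurable_fst measurable_const)
        measurable_const measurable_const).aestronglyMeasurable (max |L| |R|)
      (Filter.Eventually.of_forall fun x => by
        unfold riem; split_ifs
        exacts [le_max_left _ _, le_max_right _ _])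
  have hHriem : MemLp (fun x => Hfun p (riem ρL ρR x)) ⊤ (volume.restrict (Dom a)) := by
    have h : (fun x => Hfun p (riem ρL ρR x)) = riem (Hfun p ρL) (Hfun p ρR) := by
      ext x; unfold riem; split_ifs <;> rfl
    rw [h]; exact hriem _ _
  have hρτ : Measurable (ρ τ) := hsol.meas_ρ.comp measurable_prodMk_left
  have huτ : Measurable (u τ) := hsol.meas_u.comp measurable_prodMk_left
  have hS := slice_identity (μ := volume.restrict (Dom a)) (r := ρ τ)
    (h := fun x => Hfun p (ρ τ x)) (r₀ := riem ρL ρR) (w₀ := riem u1L u1R)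
    (h₀ := fun x => Hfun p (riem ρL ρR x)) (u := u τ) (v := V τ) (v₀ := V 0)
    (memLp_top_of_bound hρτ.aestronglyMeasurable C (.of_forall fun x => (hC τ x).1))
    (memLp_top_Hfun hp hρτ (fun x => (hC τ x).1) hnτ)
    (hriem _ _) (hriem _ _) hHriem
    (memLp_top_of_bound huτ.fst.aestronglyMeasurable C
      (.of_forall fun x => (norm_fst_le _).trans (hC τ x).2))
    (memLp_top_of_bound huτ.snd.aestronglyMeasurable C
      (.of_forall fun x => (norm_snd_le _).trans (hC τ x).2))
    (hslice (hVs τ).fst) (hslice (hVs τ).snd) (hslice (hVs 0).fst) (hslice (hVs 0).snd)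
  have hB := boundary_identity a τ ρL ρR u1L u1R (Hfun p ρL) (Hfun p ρR) (p ρL) (p ρR) hVc
  have hμ : (volume.restrict (Ioc 0 τ)).prod (volume.restrict (Dom a)) =
      volume.restrict (Ioc 0 τ ×ˢ Dom a) := by
    rw [Measure.prod_restrict, ← Measure.volume_eq_prod]
  have hbulk : ∀ {f : ℝ × (ℝ × ℝ) → ℝ}, Continuous f →
      MemLp f ⊤ ((volume.restrict (Ioc 0 τ)).prod (volume.restrict (Dom a))) := by
    intro f hf
    refine memLp_top_of_compact hf
      (isCompact_Icc.prod (isCompact_Icc.prod isCompact_Icc) :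
        IsCompact (Icc 0 τ ×ˢ Icc (-a) a ×ˢ Icc (0:ℝ) 1)) ?_
    rw [hμ]
    exact (ae_restrict_mem (measurableSet_Ioc.prod (measurableSet_dom a))).mono
      fun z hz => prod_mono Ioc_subset_Icc_self (dom_subset a) hz
  have hnn : ∀ᵐ z ∂((volume.restrict (Ioc 0 τ)).prod (volume.restrict (Dom a))),
      0 ≤ Function.uncurry ρ z := by
    rw [hμ]
    exact ae_mono (Measure.restrict_mono
      (prod_mono (Ioc_subset_Ioo_right hτ.2) subset_rfl) le_rfl) hsol.nonneg
  obtain ⟨i1, i2, i3, hI⟩ := bulk_identity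
    (μ := (volume.restrict (Ioc 0 τ)).prod (volume.restrict (Dom a)))
    (r := fun z => ρ z.1 z.2) (q := fun z => p (ρ z.1 z.2)) (u := fun z => u z.1 z.2)
    (v := fun z => V z.1 z.2)
    (d := fun z => fderiv ℝ (Function.uncurry V) (z.1, z.2) (1, 0))
    (d₁ := fun z => fderiv ℝ (Function.uncurry V) (z.1, z.2) (0, (1, 0)))
    (d₂ := fun z => fderiv ℝ (Function.uncurry V) (z.1, z.2) (0, (0, 1)))
    (memLp_top_of_bound hsol.meas_ρ.aestronglyMeasurable C (.of_forall fun z => (hC z.1 z.2).1))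
    (memLp_top_pressure hp hsol.meas_ρ (fun z => (hC z.1 z.2).1) hnn)
    (memLp_top_of_bound hsol.meas_u.fst.aestronglyMeasurable C
      (.of_forall fun z => (norm_fst_le _).trans (hC z.1 z.2).2))
    (memLp_top_of_bound hsol.meas_u.snd.aestronglyMeasurable C
      (.of_forall fun z => (norm_snd_le _).trans (hC z.1 z.2).2))
    (hbulk hVc.fst) (hbulk hVc.snd)
    (hbulk (hVd.clm_apply continuous_const).fst) (hbulk (hVd.clm_apply continuous_const).snd)
    (hbulk (hVd.clm_apply continuous_const).fst) (hbulk (hVd.clm_apply continuous_const).snd)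
    (hbulk (hVd.clm_apply continuous_const).fst) (hbulk (hVd.clm_apply continuous_const).snd)
  rw [← iterated_eq_prod hτ.1.le i1, ← iterated_eq_prod hτ.1.le i2,
    ← iterated_eq_prod hτ.1.le i3] at hI
  dsimp only at hI
  have k0 : ∀ t x, deriv (fun s => V s x) t = fderiv ℝ (Function.uncurry V) (t, x) (1, 0) :=
    fun t x => (hasDerivAt_time hV.1 t x).deriv
  have k11 : ∀ t x, pd1 (fun y => (V t y).1) x
      = (fderiv ℝ (Function.uncurry V) (t, x) (0, (1, 0))).1 :=
    fun t x => (hasDerivAt_fst (hasDerivAt_x1 hV.1 t x)).deriv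
  have k12 : ∀ t x, pd1 (fun y => (V t y).2) x
      = (fderiv ℝ (Function.uncurry V) (t, x) (0, (1, 0))).2 :=
    fun t x => (hasDerivAt_snd (hasDerivAt_x1 hV.1 t x)).deriv
  have k21 : ∀ t x, pd2 (fun y => (V t y).1) x
      = (fderiv ℝ (Function.uncurry V) (t, x) (0, (0, 1))).1 :=
    fun t x => (hasDerivAt_fst (hasDerivAt_x2 hV.1 t x)).deriv
  have k22 : ∀ t x, pd2 (fun y => (V t y).2) x
      = (fderiv ℝ (Function.uncurry V) (t, x) (0, (0, 1))).2 :=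
    fun t x => (hasDerivAt_snd (hasDerivAt_x2 hV.1 t x)).deriv
  have m0 : ∀ t x, pdt (fun t x => 1 / 2 * dot (V t x) (V t x)) t x
      = dot (V t x) (fderiv ℝ (Function.uncurry V) (t, x) (1, 0)) :=
    fun t x => (hasDerivAt_half_sq (hasDerivAt_time hV.1 t x)).deriv
  have m1 : ∀ t x, pd1 (fun x => 1 / 2 * dot (V t x) (V t x)) x
      = dot (V t x) (fderiv ℝ (Function.uncurry V) (t, x) (0, (1, 0))) :=
    fun t x => (hasDerivAt_half_sq (hasDerivAt_x1 hV.1 t x)).deriv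
  have m2 : ∀ t x, pd2 (fun x => 1 / 2 * dot (V t x) (V t x)) x
      = dot (V t x) (fderiv ℝ (Function.uncurry V) (t, x) (0, (0, 1))) :=
    fun t x => (hasDerivAt_half_sq (hasDerivAt_x2 hV.1 t x)).deriv
  simp only [m0, m1, m2] at e1
  simp only [k0, k11, k12, k21, k22] at e2 ⊢
  linarith only [hS, hB, hI, e1, e2, e3]

end
end

section
/- Reduced form of the relative entropy inequality (inequality (REI2)): Let (ρ,u) be a bounded admissible weak solution of the Riemann problem on (0,T)×Ω with ρ ≥ 0 a.e., and let (ρ̃,ũ) be the rarefaction-wave solution of the Riemann problem with ũ = (ũ¹,0). Then for a.a. τ ∈ (0,T): ∫_Ω E(ρ,u | ρ̃,ũ)(τ,·) dx ≤ − ∫₀^τ∫_Ω [ρ(ũ¹ − u¹)² + (p(ρ) − p'(ρ̃)(ρ − ρ̃) − p(ρ̃))] ∂_{x₁}ũ¹ dx dt. -/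
/-!
By `relEnt_eq`, the relative entropy at time `τ` is the energy density `½ρ|u|² + H(ρ)` plus the
densities of four balance laws, each multiplied by a function of `ξ = x₁/t`: conservation of mass
with `½U² - H'(R)`, balance of momentum with `U` (with a minus sign), and the identities for
`∫∫ ∂_t φ` and `∫∫ ∂_{x₁} φ` with `p(R)` and `p(R)U`. Adding the energy inequality leaves a bulk
term and a boundary term. The profile equations hold for almost every `ξ` (`wave_ae`) and turn the
bulk term into the right-hand side of the inequality (`bulk_eq`).

*Admissibility of the test functions.* The functions `ψ(x₁/t)` are only Lipschitz away from `t = 0`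
and singular at `t = 0`. The profile is constant outside a bounded interval (`wave_far`), so the
derivatives of `ψ(x₁/t)` are supported in `|x₁| ≤ M t`, where they are bounded by a multiple of
`t^{-1/2} |x₁|^{-1/2}`, an integrable function. The same majorant serves for the approximations in
which `t` is replaced by `√(t² + (n+1)⁻²)` and `ψ` by its Steklov averages, so the weak
identities survive the passage to the limit (`BalanceLaw.holds_Lip`).

*Sign of the boundary term.* The rarefaction fan may leave `Ω` before time `τ`, in which case the
boundary terms do not cancel. At `x₁ = ± a` they combine into `B(ξ) = v cE + (p(r) - p(R)) (v - U)`,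
where `(r, v)` is the boundary state, `cE` is its relative energy with respect to the profile, and
`ξ = ± a/t`. The flux `cD = B - ξ cE` through the ray `x₁ = ξ t` is nonincreasing in `ξ`
(`cD_antitone`) and vanishes where the profile equals `(r, v)`. Hence `B ≥ 0` at the right end and
`B ≤ 0` at the left end (`flux_right`, `flux_left`), so the boundary contribution has the
right sign.
-/

open MeasureTheory Set

noncomputable section

/-- The rarefaction-wave solution of the Riemann problem: `ρ̃(t,x) = R(x₁/t)`,
`ũ(t,x) = (U(x₁/t),0)` with `R, U` Lipschitz, `U` nondecreasing, `R` bounded below by a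
positive constant, solving the compressible Euler system a.e. in `(0,T) × ℝ²` and attaining
the Riemann data in `L¹_loc` as `t → 0+`. -/
structure IsRarefactionWave (T : ℝ) (p : ℝ → ℝ) (ρL ρR u1L u1R : ℝ)
    (R U : ℝ → ℝ) : Prop where
  lipR : ∃ K, LipschitzWith K R
  lipU : ∃ K, LipschitzWith K U
  monoU : Monotone U
  lower : ∃ c : ℝ, 0 < c ∧ ∀ ξ, c ≤ R ξ
  euler : ∀ᵐ z ∂(volume.restrict (Ioo 0 T ×ˢ (univ : Set (ℝ × ℝ))) :
      Measure (ℝ × (ℝ × ℝ))),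
    ((DifferentiableAt ℝ (fun s => R (z.2.1 / s)) z.1 ∧
        DifferentiableAt ℝ (fun s => U (z.2.1 / s)) z.1) ∧
      (DifferentiableAt ℝ (fun y => R (y / z.1)) z.2.1 ∧
        DifferentiableAt ℝ (fun y => U (y / z.1)) z.2.1 ∧
        DifferentiableAt ℝ (fun y => p (R (y / z.1))) z.2.1)) ∧
    (deriv (fun s => R (z.2.1 / s)) z.1
        + deriv (fun y => R (y / z.1) * U (y / z.1)) z.2.1 = 0 ∧
      deriv (fun s => R (z.2.1 / s) * U (z.2.1 / s)) z.1
        + deriv (fun y => R (y / z.1) * U (y / z.1) ^ 2 + p (R (y / z.1))) z.2.1 = 0)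
  init : ∀ b : ℝ, 0 < b → Filter.Tendsto
    (fun t => ∫ x in (Ioo (-b) b ×ˢ Ioo (-b) b : Set (ℝ × ℝ)),
      (|R (x.1 / t) - riem ρL ρR x| + |U (x.1 / t) - riem u1L u1R x|))
    (nhdsWithin 0 (Ioi 0)) (nhds 0)


/-- The relative entropy `E(ρ,u | r,V) = ½ ρ|u−V|² + H(ρ) − H'(r)(ρ−r) − H(r)`. -/
def relEnt (p : ℝ → ℝ) (ρ : ℝ) (u : ℝ × ℝ) (r : ℝ) (V : ℝ × ℝ) : ℝ :=
  1 / 2 * ρ * dot (u - V) (u - V) +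
    (Hfun p ρ - deriv (Hfun p) r * (ρ - r) - Hfun p r)

end

open Filter Topology

/-! ### Balance laws in one space variable -/

/-- Space-time measure on `(0,τ] × Ω`. -/
noncomputable def nu (a τ : ℝ) : Measure (ℝ × (ℝ × ℝ)) :=
  (volume.restrict (Ioc 0 τ)).prod (volume.restrict (Dom a))

/-- The majorant `t^{-1/2} |x₁|^{-1/2}`, integrable on `(0,τ] × Ω`. -/
noncomputable def maj (z : ℝ × (ℝ × ℝ)) : ℝ := (√z.1)⁻¹ * (√|z.2.1|)⁻¹

lemma restrict_Dom (a : ℝ) : (volume.restrict (Dom a) : Measure (ℝ × ℝ)) =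
    (volume.restrict (Ioo (-a) a)).prod (volume.restrict (Ioo (0:ℝ) 1)) := by
  rw [Measure.prod_restrict]; rfl

instance (a : ℝ) : IsFiniteMeasure (volume.restrict (Dom a) : Measure (ℝ × ℝ)) := by
  rw [restrict_Dom]; infer_instance

instance (a τ : ℝ) : IsFiniteMeasure (nu a τ) := by
  unfold nu; infer_instance

lemma intervalIntegrable_sqrt_inv (b : ℝ) (hb : 0 ≤ b) :
    IntervalIntegrable (fun x : ℝ => (√|x|)⁻¹) volume 0 b := by
  have h := @intervalIntegral.intervalIntegrable_rpow' 0 b (-(1/2)) (by norm_num)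
  refine h.congr ?_
  intro x hx
  rw [uIoc_of_le hb] at hx
  show x ^ (-(1/2) : ℝ) = _
  simp only
  rw [Real.rpow_neg hx.1.le, abs_of_pos hx.1, Real.sqrt_eq_rpow]

lemma integrable_maj {a τ : ℝ} (ha : 0 < a) (hτ : 0 < τ) : Integrable maj (nu a τ) := by
  have h1 : Integrable (fun t : ℝ => (√t)⁻¹) (volume.restrict (Ioc 0 τ)) := by
    have h := intervalIntegrable_sqrt_inv τ hτ.le
    rw [intervalIntegrable_iff_integrableOn_Ioc_of_le hτ.le] at h
    refine h.congr ?_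
    filter_upwards [ae_restrict_mem measurableSet_Ioc] with t ht
    rw [abs_of_pos ht.1]
  have h2 : IntegrableOn (fun x : ℝ => (√|x|)⁻¹) (Ioc (-a) a) := by
    have h := intervalIntegrable_sqrt_inv a ha.le
    have h' : IntervalIntegrable (fun x : ℝ => (√|x|)⁻¹) volume (-a) 0 := by
      have := (h.comp_mul_left (c := -1)).symm
      simpa [div_neg] using this
    exact (intervalIntegrable_iff_integrableOn_Ioc_of_le (by linarith)).1 (h'.trans h)
  have h3 : Integrable (fun x : ℝ × ℝ => (√|x.1|)⁻¹) (volume.restrict (Dom a)) := by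
    rw [restrict_Dom]
    have h4 : Integrable (fun x : ℝ => (√|x|)⁻¹) (volume.restrict (Ioo (-a) a)) :=
      h2.mono_set Ioo_subset_Ioc_self
    have := h4.mul_prod (integrable_const (1:ℝ) (μ := volume.restrict (Ioo (0:ℝ) 1)))
    simpa using this
  exact h1.mul_prod h3

lemma ae_Dom_ne (a : ℝ) : ∀ᵐ x ∂(volume.restrict (Dom a) : Measure (ℝ × ℝ)),
    x.1 ≠ 0 ∧ x.1 ∈ Ioo (-a) a := by
  have h1 : ∀ᵐ x : ℝ ∂(volume.restrict (Ioo (-a) a)), x ≠ 0 := by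
    rw [ae_iff]; simp
  have h2 : ∀ᵐ x : ℝ ∂(volume.restrict (Ioo (-a) a)), x ∈ Ioo (-a) a :=
    ae_restrict_mem measurableSet_Ioo
  rw [restrict_Dom]
  exact Measure.quasiMeasurePreserving_fst.ae (h1.and h2)

lemma ae_nu (a τ : ℝ) : ∀ᵐ z ∂(nu a τ), 0 < z.1 ∧ z.1 ≤ τ ∧ z.2.1 ≠ 0 ∧ z.2.1 ∈ Ioo (-a) a := by
  have h1 : ∀ᵐ t : ℝ ∂(volume.restrict (Ioc 0 τ)), t ∈ Ioc 0 τ :=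
    ae_restrict_mem measurableSet_Ioc
  have h2 : ∀ᵐ z ∂(nu a τ), z.1 ∈ Ioc 0 τ := Measure.quasiMeasurePreserving_fst.ae h1
  have h3 : ∀ᵐ z ∂(nu a τ), z.2.1 ≠ 0 ∧ z.2.1 ∈ Ioo (-a) a :=
    Measure.quasiMeasurePreserving_snd.ae (ae_Dom_ne a)
  filter_upwards [h2, h3] with z h h' using ⟨h.1, h.2, h'⟩

/-- The weak identity at time `τ` for the balance law `∂_t A + ∂_{x₁} B = 0`, with initial values
`AL`, `AR` of the density `A` and boundary values `FL`, `FR` of the flux `B`. The test function is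
`f(t,x₁)`; its initial trace `f0` and its partial derivatives `ft`, `fx` are separate data, so that
`f` may be merely Lipschitz away from `t = 0` and discontinuous at `t = 0`. -/
def Holds (a τ : ℝ) (A B : ℝ → ℝ × ℝ → ℝ) (AL AR FL FR : ℝ)
    (f : ℝ → ℝ → ℝ) (f0 : ℝ → ℝ) (ft fx : ℝ → ℝ → ℝ) : Prop :=
  (∫ x in Dom a, (A τ x * f τ x.1 - riem AL AR x * f0 x.1)) +
    (∫ t in (0:ℝ)..τ, (FR * f t a - FL * f t (-a))) =
  ∫ z, (A z.1 z.2 * ft z.1 z.2.1 + B z.1 z.2 * fx z.1 z.2.1) ∂(nu a τ)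

/-- Bounded measurable fields `A`, `B` satisfying the weak identity at time `τ` for every `C¹` test
function of `(t,x₁)` whose derivatives are dominated by a multiple of `maj`. -/
structure BalanceLaw (a τ : ℝ) (A B : ℝ → ℝ × ℝ → ℝ) (AL AR FL FR : ℝ) : Prop where
  measA : Measurable (Function.uncurry A)
  measB : Measurable (Function.uncurry B)
  bdd : ∃ C, ∀ t x, |A t x| ≤ C ∧ |B t x| ≤ C
  law : ∀ φ : ℝ × ℝ → ℝ, ContDiff ℝ 1 φ →
    (∃ C, ∀ᵐ z ∂(nu a τ), |deriv (fun s => φ (s, z.2.1)) z.1| ≤ C * maj z ∧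
      |deriv (fun y => φ (z.1, y)) z.2.1| ≤ C * maj z) →
    Holds a τ A B AL AR FL FR (fun t x => φ (t, x)) (fun x => φ (0, x))
      (fun t x => deriv (fun s => φ (s, x)) t) (fun t x => deriv (fun y => φ (t, y)) x)

lemma measurable_riem (l r : ℝ) : Measurable (riem l r) :=
  Measurable.ite (measurableSet_le measurable_fst measurable_const) measurable_const
    measurable_const

lemma abs_riem_le (l r : ℝ) (x) : |riem l r x| ≤ |l| + |r| := by
  unfold riem; split_ifs <;> linarith [abs_nonneg l, abs_nonneg r]

lemma integrable_fields {a τ : ℝ} {A B : ℝ → ℝ × ℝ → ℝ} (ha : 0 < a) (hτ : 0 < τ)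
    (mA : Measurable (Function.uncurry A)) (mB : Measurable (Function.uncurry B))
    (bdd : ∃ C, ∀ t x, |A t x| ≤ C ∧ |B t x| ≤ C) {ft fx : ℝ → ℝ → ℝ}
    (mt : Measurable (Function.uncurry ft)) (mx : Measurable (Function.uncurry fx)) {C : ℝ}
    (hC : ∀ᵐ z ∂(nu a τ), |ft z.1 z.2.1| ≤ C * maj z ∧ |fx z.1 z.2.1| ≤ C * maj z) :
    Integrable (fun z : ℝ × (ℝ × ℝ) => A z.1 z.2 * ft z.1 z.2.1 + B z.1 z.2 * fx z.1 z.2.1)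
      (nu a τ) := by
  obtain ⟨D, hD⟩ := bdd
  have mp : Measurable (fun z : ℝ × (ℝ × ℝ) => (z.1, z.2.1)) := by fun_prop
  refine Integrable.mono' ((integrable_maj ha hτ).const_mul (D * C + D * C)) ?_ ?_
  · exact ((mA.mul (mt.comp mp)).add (mB.mul (mx.comp mp))).aestronglyMeasurable
  · filter_upwards [hC] with z hz
    have h1 := (hD z.1 z.2).1
    have h2 := (hD z.1 z.2).2
    have hD0 : 0 ≤ D := (abs_nonneg _).trans h1
    calc ‖_‖ ≤ |A z.1 z.2| * |ft z.1 z.2.1| + |B z.1 z.2| * |fx z.1 z.2.1| := by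
          rw [Real.norm_eq_abs, ← abs_mul, ← abs_mul]; exact abs_add_le _ _
      _ ≤ D * (C * maj z) + D * (C * maj z) := by
          gcongr
          · exact hz.1
          · exact hz.2
      _ = _ := by ring

lemma BalanceLaw.integrable {a τ : ℝ} {A B : ℝ → ℝ × ℝ → ℝ} {AL AR FL FR : ℝ}
    (hb : BalanceLaw a τ A B AL AR FL FR) (ha : 0 < a) (hτ : 0 < τ) {ft fx : ℝ → ℝ → ℝ}
    (mt : Measurable (Function.uncurry ft)) (mx : Measurable (Function.uncurry fx)) {C : ℝ}
    (hC : ∀ᵐ z ∂(nu a τ), |ft z.1 z.2.1| ≤ C * maj z ∧ |fx z.1 z.2.1| ≤ C * maj z) :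
    Integrable (fun z : ℝ × (ℝ × ℝ) => A z.1 z.2 * ft z.1 z.2.1 + B z.1 z.2 * fx z.1 z.2.1)
      (nu a τ) :=
  integrable_fields ha hτ hb.measA hb.measB hb.bdd mt mx hC

/-- The weak identity passes to limits of test functions, by dominated convergence with the
majorant `maj`. -/
lemma Holds.lim {a τ : ℝ} {A B : ℝ → ℝ × ℝ → ℝ} {AL AR FL FR : ℝ}
    (hb : BalanceLaw a τ A B AL AR FL FR) (ha : 0 < a) (hτ : 0 < τ)
    {f : ℕ → ℝ → ℝ → ℝ} {f0 : ℕ → ℝ → ℝ} {ft fx : ℕ → ℝ → ℝ → ℝ}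
    {g : ℝ → ℝ → ℝ} {g0 : ℝ → ℝ} {gt gx : ℝ → ℝ → ℝ}
    (H : ∀ n, Holds a τ A B AL AR FL FR (f n) (f0 n) (ft n) (fx n))
    (mf : ∀ n, Measurable (Function.uncurry (f n))) (mf0 : ∀ n, Measurable (f0 n))
    (mt : ∀ n, Measurable (Function.uncurry (ft n)))
    (mx : ∀ n, Measurable (Function.uncurry (fx n))) {C : ℝ}
    (bf : ∀ n t x, |f n t x| ≤ C) (bf0 : ∀ n x, |f0 n x| ≤ C)
    (bt : ∀ n, ∀ᵐ z ∂(nu a τ), |ft n z.1 z.2.1| ≤ C * maj z ∧ |fx n z.1 z.2.1| ≤ C * maj z)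
    (cf : ∀ t x, 0 < t → x ≠ 0 → Tendsto (fun n => f n t x) atTop (𝓝 (g t x)))
    (cf0 : ∀ x, x ≠ 0 → Tendsto (fun n => f0 n x) atTop (𝓝 (g0 x)))
    (ct : ∀ᵐ z ∂(nu a τ), Tendsto (fun n => ft n z.1 z.2.1) atTop (𝓝 (gt z.1 z.2.1)) ∧
      Tendsto (fun n => fx n z.1 z.2.1) atTop (𝓝 (gx z.1 z.2.1))) :
    Holds a τ A B AL AR FL FR g g0 gt gx := by
  obtain ⟨D, hD⟩ := hb.bdd
  have hD0 : 0 ≤ D := (abs_nonneg _).trans (hD 0 0).1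
  have hC0 : 0 ≤ C := (abs_nonneg _).trans (bf 0 0 0)
  have mp : Measurable (fun z : ℝ × (ℝ × ℝ) => (z.1, z.2.1)) := by fun_prop
  have mA : Measurable (A τ) := hb.measA.comp (by fun_prop : Measurable (fun x => (τ, x)))
  have t1 : Tendsto (fun n => ∫ x in Dom a, (A τ x * f n τ x.1 - riem AL AR x * f0 n x.1)) atTop
      (𝓝 (∫ x in Dom a, (A τ x * g τ x.1 - riem AL AR x * g0 x.1))) := by
    refine tendsto_integral_of_dominated_convergence
      (fun _ => D * C + (|AL| + |AR|) * C) ?_ (integrable_const _) ?_ ?_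
    · intro n
      refine Measurable.aestronglyMeasurable ?_
      refine (mA.mul ((mf n).comp (by fun_prop : Measurable (fun x : ℝ × ℝ => (τ, x.1))))).sub
        ((measurable_riem _ _).mul ((mf0 n).comp measurable_fst))
    · intro n
      refine Eventually.of_forall fun x => ?_
      rw [Real.norm_eq_abs]
      refine (abs_sub _ _).trans ?_
      rw [abs_mul, abs_mul]
      gcongr
      · exact (hD τ x).1
      · exact bf _ _ _
      · exact abs_riem_le _ _ _
      · exact bf0 _ _
    · filter_upwards [ae_Dom_ne a] with x hx
      exact ((cf τ x.1 hτ hx.1).const_mul _).sub ((cf0 x.1 hx.1).const_mul _)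
  have t2 : Tendsto (fun n => ∫ t in (0:ℝ)..τ, (FR * f n t a - FL * f n t (-a))) atTop
      (𝓝 (∫ t in (0:ℝ)..τ, (FR * g t a - FL * g t (-a)))) := by
    simp only [intervalIntegral.integral_of_le hτ.le]
    refine tendsto_integral_of_dominated_convergence
      (fun _ => |FR| * C + |FL| * C) ?_ (integrable_const _) ?_ ?_
    · intro n
      refine Measurable.aestronglyMeasurable ?_
      exact (((mf n).comp (by fun_prop : Measurable (fun x : ℝ => (x, a)))).const_mul _).sub
        (((mf n).comp (by fun_prop : Measurable (fun x : ℝ => (x, -a)))).const_mul _)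
    · intro n
      refine Eventually.of_forall fun x => ?_
      rw [Real.norm_eq_abs]
      refine (abs_sub _ _).trans ?_
      rw [abs_mul, abs_mul]
      gcongr
      · exact bf _ _ _
      · exact bf _ _ _
    · filter_upwards [ae_restrict_mem measurableSet_Ioc] with t ht
      exact ((cf t a ht.1 ha.ne').const_mul _).sub
        ((cf t (-a) ht.1 (by linarith : -a < 0).ne).const_mul _)
  have t3 : Tendsto (fun n => ∫ z, (A z.1 z.2 * ft n z.1 z.2.1 + B z.1 z.2 * fx n z.1 z.2.1)
      ∂(nu a τ)) atTop
      (𝓝 (∫ z, (A z.1 z.2 * gt z.1 z.2.1 + B z.1 z.2 * gx z.1 z.2.1) ∂(nu a τ))) := by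
    refine tendsto_integral_of_dominated_convergence
      (fun z => (D * C + D * C) * maj z) ?_ ((integrable_maj ha hτ).const_mul _) ?_ ?_
    · intro n
      exact (hb.integrable ha hτ (mt n) (mx n) (bt n)).aestronglyMeasurable
    · intro n
      filter_upwards [bt n] with z hz
      calc ‖_‖ ≤ |A z.1 z.2| * |ft n z.1 z.2.1| + |B z.1 z.2| * |fx n z.1 z.2.1| := by
            rw [Real.norm_eq_abs, ← abs_mul, ← abs_mul]; exact abs_add_le _ _
        _ ≤ D * (C * maj z) + D * (C * maj z) := by
            gcongr
            · exact (hD z.1 z.2).1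
            · exact hz.1
            · exact (hD z.1 z.2).2
            · exact hz.2
        _ = _ := by ring
    · filter_upwards [ct] with z hz
      exact (hz.1.const_mul _).add (hz.2.const_mul _)
  have t4 := t1.add t2
  refine tendsto_nhds_unique t4 ?_
  have : (fun n => (∫ x in Dom a, (A τ x * f n τ x.1 - riem AL AR x * f0 n x.1)) +
      ∫ t in (0:ℝ)..τ, (FR * f n t a - FL * f n t (-a))) = fun n =>
      ∫ z, (A z.1 z.2 * ft n z.1 z.2.1 + B z.1 z.2 * fx n z.1 z.2.1) ∂(nu a τ) :=
    funext H
  rw [this]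
  exact t3

/-! ### Self-similar test functions -/

/-- If `d` is bounded by `K` and vanishes outside `[-M,M]`, then `d(x/s) ≠ 0` forces `|x| ≤ M s`,
hence `1/s ≤ M t^{-1/2} |x|^{-1/2}` for all `s ≥ t`. The bound is uniform in `s`, which is what
makes it a majorant for the regularised test functions. -/
lemma kernel_bound {d : ℝ → ℝ} {K M : ℝ} (hM : 1 ≤ M) (hK : ∀ ξ, |d ξ| ≤ K)
    (h0 : ∀ ξ, M < |ξ| → d ξ = 0) {s t x : ℝ} (ht : 0 < t) (hts : t ≤ s) (hx : x ≠ 0) :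
    |d (x / s)| / s ≤ K * M * ((√t)⁻¹ * (√|x|)⁻¹) ∧
    |d (x / s)| * |x / s| / s ≤ K * M * M * ((√t)⁻¹ * (√|x|)⁻¹) := by
  have hs : 0 < s := ht.trans_le hts
  have hK0 : 0 ≤ K := (abs_nonneg _).trans (hK 0)
  have hx' : 0 < |x| := abs_pos.2 hx
  have p1 : 0 < √t := Real.sqrt_pos.2 ht
  have p2 : 0 < √|x| := Real.sqrt_pos.2 hx'
  by_cases h : M < |x / s|
  · rw [h0 _ h]; simp; constructor <;> positivity
  · push Not at h
    have hxs : |x| ≤ M * s := by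
      rw [abs_div, abs_of_pos hs, div_le_iff₀ hs] at h; exact h
    have h1 : √t * √|x| ≤ M * s := by
      rw [← Real.sqrt_mul ht.le]
      refine Real.sqrt_le_iff.2 ⟨by positivity, ?_⟩
      have : t * |x| ≤ s * (M * s) := by gcongr
      nlinarith [mul_nonneg hs.le hs.le, mul_nonneg (sub_nonneg.2 hM) (mul_pos hs hs).le,
        mul_nonneg (by linarith : 0 ≤ M) (mul_nonneg (sub_nonneg.2 hM) (mul_pos hs hs).le)]
    have h2 : 1 / s ≤ M * ((√t)⁻¹ * (√|x|)⁻¹) := by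
      rw [← mul_inv, ← div_eq_mul_inv, div_le_div_iff₀ hs (by positivity)]
      linarith
    have h3 : |d (x / s)| / s ≤ K * M * ((√t)⁻¹ * (√|x|)⁻¹) := by
      calc |d (x / s)| / s = |d (x / s)| * (1 / s) := by ring
        _ ≤ K * (M * ((√t)⁻¹ * (√|x|)⁻¹)) := by gcongr; exact hK _
        _ = _ := by ring
    refine ⟨h3, ?_⟩
    calc |d (x / s)| * |x / s| / s = (|d (x / s)| / s) * |x / s| := by ring
      _ ≤ (K * M * ((√t)⁻¹ * (√|x|)⁻¹)) * M := by gcongr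
      _ = _ := by ring

lemma deriv_zero_of_const {ψ : ℝ → ℝ} {M ψL ψR : ℝ} (hL : ∀ ξ ≤ -M, ψ ξ = ψL)
    (hR : ∀ ξ, M ≤ ξ → ψ ξ = ψR) (ξ : ℝ) (hξ : M < |ξ|) : deriv ψ ξ = 0 := by
  rcases lt_abs.1 hξ with h | h
  · have : ψ =ᶠ[𝓝 ξ] fun _ => ψR := by
      filter_upwards [lt_mem_nhds h] with y hy using hR y hy.le
    rw [this.deriv_eq]; simp
  · have : ψ =ᶠ[𝓝 ξ] fun _ => ψL := by
      filter_upwards [gt_mem_nhds (by linarith : ξ < -M)] with y hy using hL y hy.le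
    rw [this.deriv_eq]; simp

/-- The smooth regularisation `√(t² + (n+1)⁻²)` of `t`, which is positive also at `t = 0`. -/
noncomputable def reg (n : ℕ) (t : ℝ) : ℝ := √(t ^ 2 + (1 / ((n : ℝ) + 1)) ^ 2)

lemma reg_arg_pos (n : ℕ) (t : ℝ) : 0 < t ^ 2 + (1 / ((n : ℝ) + 1)) ^ 2 := by positivity

lemma reg_pos (n : ℕ) (t : ℝ) : 0 < reg n t := Real.sqrt_pos.2 (reg_arg_pos n t)

lemma reg_ge (n : ℕ) {t : ℝ} (ht : 0 ≤ t) : t ≤ reg n t :=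
  Real.le_sqrt_of_sq_le (by have : 0 ≤ (1 / ((n : ℝ) + 1)) ^ 2 := by positivity
                            linarith)

lemma reg_contDiff (n : ℕ) : ContDiff ℝ 1 (reg n) := by
  unfold reg
  exact ContDiff.sqrt (by fun_prop) (fun t => (reg_arg_pos n t).ne')

lemma reg_hasDerivAt (n : ℕ) (t : ℝ) : HasDerivAt (reg n) (t / reg n t) t := by
  have h : HasDerivAt (fun t : ℝ => t ^ 2 + (1 / ((n : ℝ) + 1)) ^ 2) (2 * t) t := by
    simpa using (hasDerivAt_pow 2 t).add_const ((1 / ((n : ℝ) + 1)) ^ 2)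
  have := h.sqrt (reg_arg_pos n t).ne'
  rw [mul_div_mul_left _ _ (two_ne_zero)] at this
  exact this

lemma reg_tendsto {t : ℝ} (ht : 0 ≤ t) : Tendsto (fun n => reg n t) atTop (𝓝 t) := by
  have h1 : Tendsto (fun n : ℕ => 1 / ((n : ℝ) + 1)) atTop (𝓝 0) :=
    tendsto_one_div_add_atTop_nhds_zero_nat
  have h2 : Tendsto (fun n : ℕ => √(t ^ 2 + (1 / ((n : ℝ) + 1)) ^ 2)) atTop
      (𝓝 (√(t ^ 2 + 0 ^ 2))) :=
    (Real.continuous_sqrt.tendsto _).comp ((h1.pow 2).const_add _)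
  rw [zero_pow two_ne_zero, add_zero, Real.sqrt_sq ht] at h2
  exact h2

/-- Testing with `ψ(x₁/t)` for `ψ` of class `C¹` and constant near `±∞`, as the limit of the tests
with `ψ(x₁ / reg n t)`. -/
lemma BalanceLaw.holds_C1 {a τ : ℝ} {A B : ℝ → ℝ × ℝ → ℝ} {AL AR FL FR : ℝ}
    (hb : BalanceLaw a τ A B AL AR FL FR) (ha : 0 < a) (hτ : 0 < τ)
    {ψ : ℝ → ℝ} (hψ : ContDiff ℝ 1 ψ) {M ψL ψR K C : ℝ} (hM : 1 ≤ M)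
    (hL : ∀ ξ ≤ -M, ψ ξ = ψL) (hR : ∀ ξ, M ≤ ξ → ψ ξ = ψR)
    (hK : ∀ ξ, |deriv ψ ξ| ≤ K) (hC : ∀ ξ, |ψ ξ| ≤ C) :
    Holds a τ A B AL AR FL FR (fun t x => ψ (x / t)) (fun x => if x ≤ 0 then ψL else ψR)
      (fun t x => -(deriv ψ (x / t) * (x / t) / t)) (fun t x => deriv ψ (x / t) / t) := by
  have hK0 : 0 ≤ K := (abs_nonneg _).trans (hK 0)
  have hC0 : 0 ≤ C := (abs_nonneg _).trans (hC 0)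
  have hd : ∀ ξ, HasDerivAt ψ (deriv ψ ξ) ξ := fun ξ =>
    ((hψ.differentiable one_ne_zero) ξ).hasDerivAt
  have hdc : Continuous (deriv ψ) := hψ.continuous_deriv le_rfl
  have hz := deriv_zero_of_const hL hR
  have dt : ∀ n t x, deriv (fun s => ψ (x / reg n s)) t =
      -(deriv ψ (x / reg n t) * (x / reg n t) * (t / reg n t) / reg n t) := by
    intro n t x
    have hr := (reg_pos n t).ne'
    have h1 : HasDerivAt (fun s => x / reg n s) (-(x * (t / reg n t)) / reg n t ^ 2) t := by
      have := (hasDerivAt_const t x).div (reg_hasDerivAt n t) hr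
      refine this.congr_deriv ?_
      ring
    have h2 : HasDerivAt (fun s => ψ (x / reg n s)) _ t := (hd _).comp t h1
    rw [h2.deriv]; field_simp
  have dx : ∀ n t x, deriv (fun y => ψ (y / reg n t)) x = deriv ψ (x / reg n t) / reg n t := by
    intro n t x
    have h1 : HasDerivAt (fun y => y / reg n t) (1 / reg n t) x :=
      (hasDerivAt_id x).div_const _
    have h2 : HasDerivAt (fun y => ψ (y / reg n t)) _ x := (hd _).comp x h1
    rw [h2.deriv]; ring
  have cD : ∀ n, ContDiff ℝ 1 (fun z : ℝ × ℝ => ψ (z.2 / reg n z.1)) := by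
    intro n
    exact hψ.comp (contDiff_snd.div ((reg_contDiff n).comp contDiff_fst)
      (fun z => (reg_pos n z.1).ne'))
  have hbd : ∀ n, ∀ᵐ z ∂(nu a τ),
      |deriv (fun s => ψ (z.2.1 / reg n s)) z.1| ≤ (K * M * M + C) * maj z ∧
      |deriv (fun y => ψ (y / reg n z.1)) z.2.1| ≤ (K * M * M + C) * maj z := by
    intro n
    filter_upwards [ae_nu a τ] with z hz'
    obtain ⟨h1, -, h2, -⟩ := hz'
    have hkb := kernel_bound hM hK hz h1 (reg_ge n h1.le) h2
    have hr := reg_pos n z.1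
    have hmaj : 0 ≤ maj z := by unfold maj; positivity
    have hle : (t : ℝ) → t ≤ K * M * M * maj z → t ≤ (K * M * M + C) * maj z := by
      intro t _
      nlinarith [mul_nonneg hC0 hmaj]
    constructor
    · apply hle
      rw [dt, abs_neg, abs_div, abs_mul, abs_mul, abs_of_pos hr, abs_of_nonneg
        (by positivity : 0 ≤ z.1 / reg n z.1)]
      have : z.1 / reg n z.1 ≤ 1 := by
        rw [div_le_one hr]; exact reg_ge n h1.le
      refine le_trans ?_ hkb.2
      refine div_le_div_of_nonneg_right ?_ hr.le
      calc |deriv ψ (z.2.1 / reg n z.1)| * |z.2.1 / reg n z.1| * (z.1 / reg n z.1)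
          ≤ |deriv ψ (z.2.1 / reg n z.1)| * |z.2.1 / reg n z.1| * 1 := by gcongr
        _ = _ := mul_one _
    · apply hle
      rw [dx, abs_div, abs_of_pos hr]
      refine hkb.1.trans ?_
      have hMK : K * M ≤ K * M * M := le_mul_of_one_le_right (by positivity) hM
      exact mul_le_mul_of_nonneg_right hMK hmaj
  refine Holds.lim hb ha hτ (C := K * M * M + C)
    (f := fun n t x => ψ (x / reg n t)) (f0 := fun n x => ψ (x / reg n 0))
    (ft := fun n t x => deriv (fun s => ψ (x / reg n s)) t)
    (fx := fun n t x => deriv (fun y => ψ (y / reg n t)) x)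
    (fun n => ?_) (fun n => ?_) (fun n => ?_) (fun n => ?_) (fun n => ?_) (fun n t x => ?_)
    (fun n x => ?_) hbd (fun t x ht hx => ?_) (fun x hx => ?_) ?_
  · exact hb.law _ (cD n) ⟨_, hbd n⟩
  · exact (cD n).continuous.measurable
  · exact (hψ.continuous.comp (by fun_prop)).measurable
  · have : Function.uncurry (fun t x => deriv (fun s => ψ (x / reg n s)) t) = fun z : ℝ × ℝ =>
      -(deriv ψ (z.2 / reg n z.1) * (z.2 / reg n z.1) * (z.1 / reg n z.1) / reg n z.1) := by
      ext z; exact dt n z.1 z.2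
    rw [this]
    have m1 := hdc.measurable
    have m2 := (reg_contDiff n).continuous.measurable
    fun_prop
  · have : Function.uncurry (fun t x => deriv (fun y => ψ (y / reg n t)) x) = fun z : ℝ × ℝ =>
      deriv ψ (z.2 / reg n z.1) / reg n z.1 := by
      ext z; exact dx n z.1 z.2
    rw [this]
    have m1 := hdc.measurable
    have m2 := (reg_contDiff n).continuous.measurable
    fun_prop
  · have : 0 ≤ K * M * M := by positivity
    linarith [hC (x / reg n t)]
  · have : 0 ≤ K * M * M := by positivity
    linarith [hC (x / reg n 0)]
  · exact (hψ.continuous.tendsto _).comp (tendsto_const_nhds.div (reg_tendsto ht.le) ht.ne')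
  · have h0 : ∀ n, reg n 0 = 1 / ((n : ℝ) + 1) := by
      intro n; unfold reg
      rw [zero_pow two_ne_zero, zero_add, Real.sqrt_sq (by positivity)]
    have h1 : Tendsto (fun n : ℕ => (n : ℝ) + 1) atTop atTop :=
      tendsto_atTop_add_const_right _ _ tendsto_natCast_atTop_atTop
    refine tendsto_const_nhds.congr' ?_
    rcases lt_or_gt_of_ne hx with h | h
    · rw [if_pos h.le]
      filter_upwards [(h1.const_mul_atTop_of_neg h).eventually_le_atBot (-M)] with n hn
      rw [h0, hL]
      rw [div_div_eq_mul_div, div_one]; exact hn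
    · rw [if_neg (not_le.2 h)]
      filter_upwards [(h1.const_mul_atTop h).eventually_ge_atTop M] with n hn
      rw [h0, hR]
      rw [div_div_eq_mul_div, div_one]; exact hn
  · filter_upwards [ae_nu a τ] with z hz'
    obtain ⟨h1, -, h2, -⟩ := hz'
    have r1 := reg_tendsto h1.le
    have r2 : Tendsto (fun n => z.2.1 / reg n z.1) atTop (𝓝 (z.2.1 / z.1)) :=
      tendsto_const_nhds.div r1 h1.ne'
    have r3 := (hdc.tendsto _).comp r2
    have r4 : Tendsto (fun n => z.1 / reg n z.1) atTop (𝓝 1) := by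
      have := (tendsto_const_nhds (x := z.1)).div r1 h1.ne'
      rwa [div_self h1.ne'] at this
    simp only [dt, dx]
    constructor
    · have := (((r3.mul r2).mul r4).div r1 h1.ne').neg
      simpa using this
    · exact r3.div r1 h1.ne'

lemma slope_seq {f : ℝ → ℝ} {f' x : ℝ} (h : HasDerivAt f f' x) :
    Tendsto (fun n : ℕ => ((n : ℝ) + 1) * (f (x + 1 / ((n : ℝ) + 1)) - f x)) atTop (𝓝 f') := by
  have h1 := h.tendsto_slope_zero
  have h2 : Tendsto (fun n : ℕ => 1 / ((n : ℝ) + 1)) atTop (𝓝[≠] 0) :=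
    tendsto_nhdsWithin_iff.2 ⟨tendsto_one_div_add_atTop_nhds_zero_nat,
      Eventually.of_forall fun n => by simp only [mem_compl_iff, mem_singleton_iff]; positivity⟩
  refine (h1.comp h2).congr fun n => ?_
  simp

/-- A property that holds for a.e. `ξ` holds at `x₁/t` for a.e. `(t,x)`. -/
lemma ae_nu_ratio (a τ : ℝ) {P : ℝ → Prop} (hP : ∀ᵐ ξ, P ξ) :
    ∀ᵐ z ∂(nu a τ), P (z.2.1 / z.1) := by
  obtain ⟨N, hN1, hN2, hN3⟩ := exists_measurable_superset_of_null (ae_iff.1 hP)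
  have key : ∀ᵐ z ∂(nu a τ), z.2.1 / z.1 ∉ N := by
    unfold nu
    have hm : MeasurableSet {z : ℝ × (ℝ × ℝ) | z.2.1 / z.1 ∉ N} := by
      have : Measurable (fun z : ℝ × (ℝ × ℝ) => z.2.1 / z.1) := by fun_prop
      exact this hN2.compl
    rw [Measure.ae_prod_iff_ae_ae hm]
    filter_upwards [ae_restrict_mem measurableSet_Ioc] with t ht
    have h1 : ∀ᵐ y : ℝ, y / t ∉ N := by
      have hq : Measure.QuasiMeasurePreserving (fun y : ℝ => y / t) volume volume := by
        simp only [div_eq_inv_mul]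
        exact Measure.quasiMeasurePreserving_smul (volume : Measure ℝ) (inv_ne_zero ht.1.ne')
      exact hq.ae (measure_eq_zero_iff_ae_notMem.1 hN3)
    rw [restrict_Dom]
    exact Measure.quasiMeasurePreserving_fst.ae (ae_restrict_of_ae h1)
  filter_upwards [key] with z hz
  by_contra h
  exact hz (hN1 h)

/-- Testing with `ψ(x₁/t)` for `ψ` Lipschitz and constant near `±∞`: the Steklov averages of `ψ`
over intervals of length `1/(n+1)` are `C¹` and constant outside `[-(M+1), M+1]`. -/
lemma BalanceLaw.holds_Lip {a τ : ℝ} {A B : ℝ → ℝ × ℝ → ℝ} {AL AR FL FR : ℝ}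
    (hb : BalanceLaw a τ A B AL AR FL FR) (ha : 0 < a) (hτ : 0 < τ)
    {ψ : ℝ → ℝ} {K : NNReal} (hψ : LipschitzWith K ψ) {M ψL ψR C : ℝ} (hM : 1 ≤ M)
    (hL : ∀ ξ ≤ -M, ψ ξ = ψL) (hR : ∀ ξ, M ≤ ξ → ψ ξ = ψR) (hC : ∀ ξ, |ψ ξ| ≤ C) :
    Holds a τ A B AL AR FL FR (fun t x => ψ (x / t)) (fun x => if x ≤ 0 then ψL else ψR)
      (fun t x => -(deriv ψ (x / t) * (x / t) / t)) (fun t x => deriv ψ (x / t) / t) := by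
  have hC0 : 0 ≤ C := (abs_nonneg _).trans (hC 0)
  have hcont := hψ.continuous
  -- Steklov averages of `ψ`
  set S : ℝ → ℝ := fun ξ => ∫ y in (0:ℝ)..ξ, ψ y with hS
  have hSd : ∀ ξ, HasDerivAt S (ψ ξ) ξ := fun ξ =>
    intervalIntegral.integral_hasDerivAt_right (hcont.intervalIntegrable _ _)
      (hcont.stronglyMeasurableAtFilter _ _) hcont.continuousAt
  have hSsub : ∀ x y, S y - S x = ∫ z in x..y, ψ z := fun x y =>
    intervalIntegral.integral_interval_sub_left (hcont.intervalIntegrable _ _)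
      (hcont.intervalIntegrable _ _)
  set Q : ℕ → ℝ → ℝ := fun n ξ => ((n : ℝ) + 1) * (S (ξ + 1 / ((n : ℝ) + 1)) - S ξ) with hQ
  set D : ℕ → ℝ → ℝ := fun n ξ => ((n : ℝ) + 1) * (ψ (ξ + 1 / ((n : ℝ) + 1)) - ψ ξ) with hD
  have hQd : ∀ n ξ, HasDerivAt (Q n) (D n ξ) ξ := by
    intro n ξ
    have h1 : HasDerivAt (fun ξ => S (ξ + 1 / ((n : ℝ) + 1))) (ψ (ξ + 1 / ((n : ℝ) + 1))) ξ :=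
      (hSd _).comp_add_const ξ _
    exact (h1.sub (hSd ξ)).const_mul _
  have hQderiv : ∀ n, deriv (Q n) = D n := fun n => funext fun ξ => (hQd n ξ).deriv
  have hDc : ∀ n, Continuous (D n) := fun n => by simp only [hD]; fun_prop
  have hQC : ∀ n, ContDiff ℝ 1 (Q n) := fun n => by
    rw [contDiff_one_iff_deriv, hQderiv]
    exact ⟨fun ξ => (hQd n ξ).differentiableAt, hDc n⟩
  have hDK : ∀ n ξ, |D n ξ| ≤ K := by
    intro n ξ
    have := hψ.dist_le_mul (ξ + 1 / ((n : ℝ) + 1)) ξ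
    rw [Real.dist_eq, Real.dist_eq, add_sub_cancel_left,
      abs_of_pos (by positivity : 0 < 1 / ((n : ℝ) + 1))] at this
    simp only [hD]
    rw [abs_mul, abs_of_pos (by positivity : 0 < (n : ℝ) + 1)]
    calc _ ≤ ((n : ℝ) + 1) * (K * (1 / ((n : ℝ) + 1))) := by gcongr
      _ = K := by field_simp
  have hQb : ∀ n ξ, |Q n ξ| ≤ C := by
    intro n ξ
    simp only [hQ]
    rw [hSsub, abs_mul, abs_of_pos (by positivity : 0 < (n : ℝ) + 1)]
    have := intervalIntegral.norm_integral_le_of_norm_le_const (a := ξ)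
      (b := ξ + 1 / ((n : ℝ) + 1)) (f := ψ) (C := C) (fun x _ => hC x)
    rw [add_sub_cancel_left, abs_of_pos (by positivity : 0 < 1 / ((n : ℝ) + 1)),
      Real.norm_eq_abs] at this
    calc _ ≤ ((n : ℝ) + 1) * (C * (1 / ((n : ℝ) + 1))) := by gcongr
      _ = C := by field_simp
  have hconst : ∀ (n : ℕ) ξ c, (∀ y ∈ Icc ξ (ξ + 1 / ((n : ℝ) + 1)), ψ y = c) → Q n ξ = c := by
    intro n ξ c h
    simp only [hQ]
    rw [hSsub, intervalIntegral.integral_congr (g := fun _ => c)]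
    · simp; field_simp
    · intro y hy
      rw [uIcc_of_le (by have : 0 < 1 / ((n : ℝ) + 1) := by positivity
                         linarith)] at hy
      exact h y hy
  have hle1 : ∀ n : ℕ, 1 / ((n : ℝ) + 1) ≤ 1 := fun n => by
    rw [div_le_one (by positivity)]
    have : (0:ℝ) ≤ n := Nat.cast_nonneg n
    linarith
  have hQL : ∀ n, ∀ ξ ≤ -(M + 1), Q n ξ = ψL := fun n ξ hξ =>
    hconst n ξ _ fun y hy => hL y (by linarith [hy.2, hle1 n])
  have hQR : ∀ n, ∀ ξ, M + 1 ≤ ξ → Q n ξ = ψR := fun n ξ hξ =>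
    hconst n ξ _ fun y hy => hR y (by linarith [hy.1])
  have hbd : ∀ n, ∀ᵐ z ∂(nu a τ),
      |-(deriv (Q n) (z.2.1 / z.1) * (z.2.1 / z.1) / z.1)| ≤
        (K * (M + 1) * (M + 1) + (C + |ψL| + |ψR|)) * maj z ∧
      |deriv (Q n) (z.2.1 / z.1) / z.1| ≤
        (K * (M + 1) * (M + 1) + (C + |ψL| + |ψR|)) * maj z := by
    intro n
    filter_upwards [ae_nu a τ] with z hz'
    obtain ⟨h1, -, h2, -⟩ := hz'
    have hkb := kernel_bound (by linarith : 1 ≤ M + 1)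
      (fun ξ => (hQderiv n ▸ hDK n ξ : |deriv (Q n) ξ| ≤ K))
      (deriv_zero_of_const (hQL n) (hQR n)) h1 le_rfl h2
    have hmaj : 0 ≤ maj z := by unfold maj; positivity
    have hle : (t : ℝ) → t ≤ K * (M + 1) * (M + 1) * maj z →
        t ≤ (K * (M + 1) * (M + 1) + (C + |ψL| + |ψR|)) * maj z := by
      intro t ht
      have : 0 ≤ (C + |ψL| + |ψR|) * maj z := by positivity
      linarith
    constructor
    · apply hle
      rw [abs_neg, abs_div, abs_mul, abs_of_pos h1]
      exact hkb.2
    · apply hle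
      rw [abs_div, abs_of_pos h1]
      refine hkb.1.trans ?_
      have hMK : K * (M + 1) ≤ K * (M + 1) * (M + 1) :=
        le_mul_of_one_le_right (by positivity) (by linarith)
      exact mul_le_mul_of_nonneg_right hMK hmaj
  have hK0 : (0:ℝ) ≤ K * (M + 1) * (M + 1) := by positivity
  refine Holds.lim hb ha hτ (C := K * (M + 1) * (M + 1) + (C + |ψL| + |ψR|))
    (f := fun n t x => Q n (x / t)) (f0 := fun n x => if x ≤ 0 then ψL else ψR)
    (ft := fun n t x => -(deriv (Q n) (x / t) * (x / t) / t))
    (fx := fun n t x => deriv (Q n) (x / t) / t)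
    (fun n => ?_) (fun n => ?_) (fun n => ?_) (fun n => ?_) (fun n => ?_) (fun n t x => ?_)
    (fun n x => ?_) hbd (fun t x ht hx => ?_) (fun x hx => tendsto_const_nhds) ?_
  · exact hb.holds_C1 ha hτ (hQC n) (by linarith : 1 ≤ M + 1) (hQL n) (hQR n)
      (fun ξ => (hQderiv n ▸ hDK n ξ : |deriv (Q n) ξ| ≤ K)) (hQb n)
  · have m := (hQC n).continuous.measurable
    show Measurable fun z : ℝ × ℝ => Q n (z.2 / z.1)
    fun_prop
  · exact Measurable.ite measurableSet_Iic measurable_const measurable_const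
  · have m := measurable_deriv (Q n)
    show Measurable fun z : ℝ × ℝ => -(deriv (Q n) (z.2 / z.1) * (z.2 / z.1) / z.1)
    fun_prop
  · have m := measurable_deriv (Q n)
    show Measurable fun z : ℝ × ℝ => deriv (Q n) (z.2 / z.1) / z.1
    fun_prop
  · linarith [hQb n (x / t), abs_nonneg ψL, abs_nonneg ψR]
  · show |if x ≤ 0 then ψL else ψR| ≤ _
    split_ifs <;> linarith [abs_nonneg ψL, abs_nonneg ψR]
  · exact slope_seq (hSd _)
  · filter_upwards [ae_nu_ratio a τ hψ.ae_differentiableAt_real, ae_nu a τ] with z hz hz'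
    have h := slope_seq hz.hasDerivAt
    simp only [hQderiv]
    exact ⟨((h.mul_const _).div_const _).neg, h.div_const _⟩

/-! ### Pressure and pressure potential -/

lemma tangent_le {S : Set ℝ} {f : ℝ → ℝ} (hf : ConvexOn ℝ S f) {r x f' : ℝ} (hr : r ∈ S)
    (hx : x ∈ S) (hd : HasDerivAt f f' r) : f r + f' * (x - r) ≤ f x := by
  rcases lt_trichotomy r x with h | h | h
  · have := hf.le_slope_of_hasDerivAt hr hx h hd
    rw [slope_def_field, le_div_iff₀ (by linarith)] at this
    linarith
  · subst h; simp
  · have := hf.slope_le_of_hasDerivAt hx hr h hd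
    rw [slope_def_field, div_le_iff₀ (by linarith)] at this
    linarith

namespace PressureOK

variable {p : ℝ → ℝ}

lemma hasDerivAt (hp : PressureOK p) {r : ℝ} (hr : 0 < r) : HasDerivAt p (deriv p r) r :=
  ((hp.2.1.contDiffAt (Ioi_mem_nhds hr)).differentiableAt one_ne_zero).hasDerivAt

lemma continuousOn_deriv (hp : PressureOK p) : ContinuousOn (deriv p) (Ioi 0) :=
  hp.2.1.continuousOn_deriv_of_isOpen isOpen_Ioi le_rfl

lemma tangent (hp : PressureOK p) {r x : ℝ} (hr : 0 < r) (hx : 0 ≤ x) :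
    0 ≤ p x - deriv p r * (x - r) - p r := by
  have := tangent_le hp.2.2.2.2 (mem_Ici.2 hr.le) (mem_Ici.2 hx) (hp.hasDerivAt hr)
  linarith

lemma nonneg (hp : PressureOK p) {x : ℝ} (hx : 0 ≤ x) : 0 ≤ p x := by
  have h := strictMonoOn_of_deriv_pos (convex_Ici 0) hp.1 (by
    intro x hx
    rw [interior_Ici] at hx
    exact hp.2.2.2.1 x hx)
  have := h.monotoneOn (mem_Ici.2 le_rfl) (mem_Ici.2 hx) hx
  rwa [hp.2.2.1] at this

lemma deriv_mono (hp : PressureOK p) {r s : ℝ} (hr : 0 < r) (hrs : r ≤ s) :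
    deriv p r ≤ deriv p s :=
  (hp.2.2.2.2.subset (Ioi_subset_Ici_self) (convex_Ioi 0)).monotoneOn_deriv
    (fun _ hx => (hp.hasDerivAt hx).differentiableAt) hr (hr.trans_le hrs : 0 < s) hrs

lemma continuousOn_kernel (hp : PressureOK p) : ContinuousOn (fun z => p z / z ^ 2) (Ioi 0) :=
  (hp.1.mono Ioi_subset_Ici_self).div (by fun_prop) fun z hz => pow_ne_zero 2 (ne_of_gt hz)

lemma uIcc_subset {r : ℝ} (hr : 0 < r) : uIcc 1 r ⊆ Ioi 0 := by
  intro x hx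
  exact lt_of_lt_of_le (lt_min one_pos hr) hx.1

lemma hasDerivAt_int (hp : PressureOK p) {r : ℝ} (hr : 0 < r) :
    HasDerivAt (fun r => ∫ z in (1:ℝ)..r, p z / z ^ 2) (p r / r ^ 2) r :=
  intervalIntegral.integral_hasDerivAt_right
    (hp.continuousOn_kernel.mono (uIcc_subset hr)).intervalIntegrable
    (hp.continuousOn_kernel.stronglyMeasurableAtFilter isOpen_Ioi _ hr)
    (hp.continuousOn_kernel.continuousAt (Ioi_mem_nhds hr))

end PressureOK

/-- The derivative `H'(r) = ∫_1^r p(z)/z² dz + p(r)/r` of the pressure potential, `r > 0`. -/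
noncomputable def dH (p : ℝ → ℝ) (r : ℝ) : ℝ := (∫ z in (1:ℝ)..r, p z / z ^ 2) + p r / r

namespace PressureOK

variable {p : ℝ → ℝ}

lemma hasDerivAt_H (hp : PressureOK p) {r : ℝ} (hr : 0 < r) :
    HasDerivAt (Hfun p) (dH p r) r := by
  refine ((hasDerivAt_id r).mul (hp.hasDerivAt_int hr)).congr_deriv ?_
  simp only [dH, id]
  field_simp

lemma deriv_H (hp : PressureOK p) {r : ℝ} (hr : 0 < r) : deriv (Hfun p) r = dH p r :=
  (hp.hasDerivAt_H hr).deriv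

lemma hasDerivAt_dH (hp : PressureOK p) {r : ℝ} (hr : 0 < r) :
    HasDerivAt (dH p) (deriv p r / r) r := by
  refine ((hp.hasDerivAt_int hr).add ((hp.hasDerivAt hr).div (hasDerivAt_id r) hr.ne')).congr_deriv ?_
  simp only [id]
  field_simp
  ring

/-- `r H'(r) - H(r) = p(r)`. -/
lemma H_eq {r : ℝ} (hr : 0 < r) : Hfun p r = r * dH p r - p r := by
  simp only [dH, Hfun]
  field_simp
  ring

/-- The tangent inequality for the convex function `H`, rewritten with `r H'(r) - H(r) = p(r)`. -/
lemma H_tangent (hp : PressureOK p) {r x : ℝ} (hr : 0 < r) (hx : 0 < x) :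
    0 ≤ Hfun p x - dH p r * x + p r := by
  have hmono : MonotoneOn (dH p) (Ioi 0) :=
    monotoneOn_of_deriv_nonneg (convex_Ioi 0)
      (fun x hx => (hp.hasDerivAt_dH hx).continuousAt.continuousWithinAt)
      (by rw [interior_Ioi]
          exact fun x hx => (hp.hasDerivAt_dH hx).differentiableAt.differentiableWithinAt)
      (by rw [interior_Ioi]
          intro x hx
          rw [(hp.hasDerivAt_dH hx).deriv]
          exact div_nonneg (hp.2.2.2.1 x hx).le (le_of_lt hx))
  have hconv : ConvexOn ℝ (Ioi 0) (Hfun p) := by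
    refine MonotoneOn.convexOn_of_deriv (convex_Ioi 0)
      (fun x hx => (hp.hasDerivAt_H hx).continuousAt.continuousWithinAt) ?_ ?_
    · rw [interior_Ioi]
      exact fun x hx => (hp.hasDerivAt_H hx).differentiableAt.differentiableWithinAt
    · rw [interior_Ioi]
      exact hmono.congr fun x hx => (hp.deriv_H hx).symm
  have := tangent_le hconv hr hx (hp.hasDerivAt_H hr)
  have h2 := H_eq (p := p) hr
  nlinarith

lemma contDiffAt (hp : PressureOK p) {r : ℝ} (hr : 0 < r) : ContDiffAt ℝ 1 p r :=
  hp.2.1.contDiffAt (Ioi_mem_nhds hr)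

lemma contDiffAt_dH (hp : PressureOK p) {r : ℝ} (hr : 0 < r) : ContDiffAt ℝ 1 (dH p) r := by
  have h : ContDiffOn ℝ (0 + 1) (dH p) (Ioi 0) := by
    rw [contDiffOn_succ_iff_deriv_of_isOpen isOpen_Ioi]
    refine ⟨fun x hx => (hp.hasDerivAt_dH hx).differentiableAt.differentiableWithinAt,
      by simp, ?_⟩
    rw [contDiffOn_zero]
    have : ContinuousOn (fun r => deriv p r / r) (Ioi 0) :=
      hp.continuousOn_deriv.div continuousOn_id fun x hx => ne_of_gt hx
    exact this.congr fun x hx => (hp.hasDerivAt_dH hx).deriv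
  rw [zero_add] at h
  exact h.contDiffAt (Ioi_mem_nhds hr)

/-- `H` is bounded on bounded subsets of `[0,∞)`: near `0`, `|H(r)| ≤ p(1)` since
`p(z) ≤ z p(1)` for `z ≤ 1` by convexity. -/
lemma H_bound (hp : PressureOK p) (C : ℝ) : ∃ D, ∀ r, 0 ≤ r → r ≤ C → |Hfun p r| ≤ D := by
  obtain ⟨D, hD⟩ := (isCompact_Icc (a := (1:ℝ)) (b := C)).exists_bound_of_continuousOn
    (f := Hfun p) (fun x hx => (hp.hasDerivAt_H
      (lt_of_lt_of_le one_pos hx.1)).continuousAt.continuousWithinAt)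
  have hp1 := hp.nonneg zero_le_one
  refine ⟨|D| + p 1, fun r hr hrC => ?_⟩
  rcases le_or_gt 1 r with h | h
  · have := hD r ⟨h, hrC⟩
    rw [Real.norm_eq_abs] at this
    linarith [le_abs_self D]
  · rcases hr.eq_or_lt with rfl | hr
    · simp only [Hfun, zero_mul, abs_zero]; positivity
    · have key : ∀ z ∈ uIoc 1 r, ‖p z / z ^ 2‖ ≤ p 1 / r := by
        intro z hz
        rw [uIoc_of_ge h.le] at hz
        have hz0 : 0 < z := hr.trans hz.1
        have hc := hp.2.2.2.2.2 (mem_Ici.2 zero_le_one) (mem_Ici.2 (le_refl (0:ℝ))) hz0.le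
          (by linarith [hz.2] : 0 ≤ 1 - z) (by ring)
        simp only [smul_eq_mul, mul_one, mul_zero, add_zero, hp.2.2.1] at hc
        rw [Real.norm_eq_abs, abs_of_nonneg (div_nonneg (hp.nonneg hz0.le) (by positivity)),
          div_le_div_iff₀ (by positivity) hr]
        have h1 : r * (z * p 1) ≤ z * (z * p 1) :=
          mul_le_mul_of_nonneg_right hz.1.le (by positivity)
        have h2 : p z * r ≤ z * p 1 * r := mul_le_mul_of_nonneg_right hc hr.le
        nlinarith
      have := intervalIntegral.norm_integral_le_of_norm_le_const key
      rw [Real.norm_eq_abs] at this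
      simp only [Hfun]
      rw [abs_mul, abs_of_pos hr]
      have h1 : |r - 1| ≤ 1 := by rw [abs_le]; constructor <;> linarith
      have h2 : p 1 / r * |r - 1| ≤ p 1 / r * 1 := by gcongr
      have h3 : r * |∫ z in (1:ℝ)..r, p z / z ^ 2| ≤ r * (p 1 / r * 1) := by
        gcongr; exact this.trans h2
      have h4 : r * (p 1 / r * 1) = p 1 := by field_simp
      linarith [abs_nonneg D]

/-- The argument is truncated to `[0,∞)`, the only set on which the hypotheses control `p`. -/
lemma measurable_H (hp : PressureOK p) : Measurable fun r => Hfun p (max r 0) := by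
  classical
  have h := ContinuousOn.measurable_piecewise (s := Ioi (0:ℝ)) (f := Hfun p) (g := fun _ => 0)
    (fun x hx => (hp.hasDerivAt_H hx).continuousAt.continuousWithinAt) continuousOn_const
    measurableSet_Ioi
  convert h using 1
  ext r
  by_cases hr : 0 < r
  · rw [piecewise_eq_of_mem (Ioi 0) _ _ (mem_Ioi.2 hr), max_eq_left hr.le]
  · rw [piecewise_eq_of_notMem (Ioi 0) _ _ (fun h => hr h), max_eq_right (not_lt.1 hr)]
    simp [Hfun]

lemma continuous_p (hp : PressureOK p) : Continuous fun r => p (max r 0) :=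
  hp.1.comp_continuous (by fun_prop) fun r => mem_Ici.2 (le_max_right _ _)

lemma p_bound (hp : PressureOK p) (C : ℝ) : ∃ D, ∀ r, |r| ≤ C → |p (max r 0)| ≤ D := by
  obtain ⟨D, hD⟩ := (isCompact_Icc (a := -C) (b := C)).exists_bound_of_continuousOn
    hp.continuous_p.continuousOn
  exact ⟨D, fun r hr => hD r (abs_le.1 hr)⟩

end PressureOK

/-! ### Structure of the profile -/

/-- A Lipschitz function with almost everywhere nonnegative derivative is monotone. -/
lemma le_of_ae_deriv {f : ℝ → ℝ} {x y : ℝ} {K : NNReal} (hxy : x ≤ y)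
    (hf : LipschitzOnWith K f (Icc x y)) (hd : ∀ᵐ ξ, ξ ∈ Ioo x y → 0 ≤ deriv f ξ) :
    f x ≤ f y := by
  have h := (LipschitzOnWith.absolutelyContinuousOnInterval
    (by rwa [uIcc_of_le hxy]) : AbsolutelyContinuousOnInterval f x y).integral_deriv_eq_sub
  have h2 : 0 ≤ ∫ ξ in x..y, deriv f ξ := by
    rw [intervalIntegral.integral_of_le hxy, integral_Ioc_eq_integral_Ioo]
    exact integral_nonneg_of_ae ((ae_restrict_iff' measurableSet_Ioo).2 hd)
  linarith

/-- The profile equations of a self-similar solution of the Euler system at the point `ξ`. -/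
def WavePt (p R U : ℝ → ℝ) (ξ : ℝ) : Prop :=
  ∃ R' U', HasDerivAt R R' ξ ∧ HasDerivAt U U' ξ ∧ 0 ≤ U' ∧ R' * (ξ - U ξ) = R ξ * U' ∧
    deriv p (R ξ) * R' = R ξ * (ξ - U ξ) * U'

lemma WavePt.reflect {p R U : ℝ → ℝ} {ξ : ℝ} (h : WavePt p R U (-ξ)) :
    WavePt p (fun y => R (-y)) (fun y => -U (-y)) ξ := by
  obtain ⟨R', U', h1, h2, h3, h4, h5⟩ := h
  refine ⟨-R', U', ?_, ?_, h3, ?_, ?_⟩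
  · exact (h1.comp ξ (hasDerivAt_neg ξ)).congr_deriv (by ring)
  · exact (h2.comp ξ (hasDerivAt_neg ξ)).neg.congr_deriv (by ring)
  · linarith
  · linarith

/-- The profile equations hold almost everywhere: the Euler system is evaluated at one time `t` for
which it holds at almost every point, and rescaled by `t`. -/
lemma wave_ae {T : ℝ} {p : ℝ → ℝ} {ρL ρR u1L u1R : ℝ} {R U : ℝ → ℝ} (hT : 0 < T)
    (hp : PressureOK p) (hw : IsRarefactionWave T p ρL ρR u1L u1R R U) :
    ∀ᵐ ξ, WavePt p R U ξ := by
  obtain ⟨KR, hR⟩ := hw.lipR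
  obtain ⟨KU, hU⟩ := hw.lipU
  obtain ⟨c, hc, hlow⟩ := hw.lower
  have h := hw.euler
  rw [Measure.volume_eq_prod, ← Measure.prod_restrict, Measure.restrict_univ] at h
  have h1 := Measure.ae_ae_of_ae_prod h
  have hne : (volume.restrict (Ioo 0 T) : Measure ℝ) ≠ 0 := by
    rw [Ne, Measure.restrict_eq_zero, Real.volume_Ioo]
    simpa using hT
  have : NeZero (volume.restrict (Ioo 0 T) : Measure ℝ) := ⟨hne⟩
  obtain ⟨t, ht1, ht⟩ := (h1.and (ae_restrict_mem measurableSet_Ioo)).exists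
  have ht0 : 0 < t := ht.1
  rw [Measure.volume_eq_prod] at ht1
  have h2 := Measure.ae_ae_of_ae_prod ht1
  simp only [eventually_const] at h2
  have hq : Measure.QuasiMeasurePreserving (fun y : ℝ => t * y) volume volume :=
    Measure.quasiMeasurePreserving_smul (volume : Measure ℝ) ht0.ne'
  filter_upwards [hq.ae h2, hR.ae_differentiableAt_real, hU.ae_differentiableAt_real]
    with ξ hξ hRd hUd
  obtain ⟨-, hm, hmom⟩ := hξ
  have hrat : t * ξ / t = ξ := by field_simp
  have hs : HasDerivAt (fun s => t * ξ / s) (-ξ / t) t := by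
    refine ((hasDerivAt_const t (t * ξ)).div (hasDerivAt_id t) ht0.ne').congr_deriv ?_
    simp only [id]; field_simp; ring
  have hy : HasDerivAt (fun y => y / t) (1 / t) (t * ξ) := (hasDerivAt_id _).div_const t
  have hRR : HasDerivAt R (deriv R ξ) (t * ξ / t) := by rw [hrat]; exact hRd.hasDerivAt
  have hUU : HasDerivAt U (deriv U ξ) (t * ξ / t) := by rw [hrat]; exact hUd.hasDerivAt
  have hpp : HasDerivAt p (deriv p (R ξ)) (R (t * ξ / t)) := by
    rw [hrat]; exact hp.hasDerivAt (hc.trans_le (hlow ξ))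
  have a1 := hRR.comp t hs
  have a2 := hUU.comp t hs
  have b1 := hRR.comp (t * ξ) hy
  have b2 := hUU.comp (t * ξ) hy
  have b3 := hpp.comp (t * ξ) b1
  have e1 := a1.deriv
  have e2 := (b1.mul b2).deriv
  have e3 := (a1.mul a2).deriv
  have e4 := ((b1.mul (b2.pow 2)).add b3).deriv
  simp only [Function.comp_def, hrat, Pi.mul_def, Pi.add_def, Pi.pow_def] at e1 e2 e3 e4
  rw [e1, e2] at hm
  rw [e3, e4] at hmom
  have hnn : 0 ≤ deriv U ξ := hw.monoU.deriv_nonneg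
  have m1 : deriv R ξ * (ξ - U ξ) = R ξ * deriv U ξ := by
    have : t * (deriv R ξ * (-ξ / t) +
        (deriv R ξ * (1 / t) * U ξ + R ξ * (deriv U ξ * (1 / t)))) = 0 := by
      rw [hm, mul_zero]
    field_simp at this
    linarith
  refine ⟨deriv R ξ, deriv U ξ, hRd.hasDerivAt, hUd.hasDerivAt, hnn, m1, ?_⟩
  rw [← sub_eq_zero] at hmom m1
  have h5 := congrArg (fun w => t * w) hmom
  beta_reduce at h5
  field_simp at h5
  norm_num at h5
  linear_combination h5 + U ξ * m1

/-- The profile reaches the right state at a finite `ξ`. Monotonicity gives `U ≤ uR`; for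
`ξ ≥ uR + 1` the first profile equation makes `R` nondecreasing, so `R ≤ ρR`; and where
`(ξ - U)² > p'(ρR) ≥ p'(R)` the profile equations force `R' = U' = 0`. -/
lemma wave_right {p R U : ℝ → ℝ} {KR KU : NNReal} {ρR uR : ℝ} (hp : PressureOK p)
    (hR : LipschitzWith KR R) (hU : LipschitzWith KU U) (hmono : Monotone U)
    (hpos : ∀ ξ, 0 < R ξ) (ode : ∀ᵐ ξ, WavePt p R U ξ)
    (far : ∀ ε > 0, ∀ ξ₀, ∃ ξ ≥ ξ₀, |R ξ - ρR| + |U ξ - uR| < ε) :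
    ∃ M, ∀ ξ ≥ M, R ξ = ρR ∧ U ξ = uR := by
  have hUle : ∀ ξ, U ξ ≤ uR := by
    intro ξ
    by_contra! h
    obtain ⟨η, h1, h2⟩ := far (U ξ - uR) (by linarith) ξ
    have := hmono h1
    linarith [abs_nonneg (R η - ρR), le_abs_self (U η - uR)]
  have hRmono : ∀ x y, uR + 1 ≤ x → x ≤ y → R x ≤ R y := by
    intro x y hx hxy
    refine le_of_ae_deriv hxy (hR.lipschitzOnWith) ?_
    filter_upwards [ode] with ξ ⟨R', U', h1, h2, h3, h4, h5⟩ hξ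
    rw [h1.deriv]
    by_contra! hneg
    have := hUle ξ
    have hξ1 := hξ.1
    nlinarith [mul_nonneg (hpos ξ).le h3]
  have hRle : ∀ ξ, uR + 1 ≤ ξ → R ξ ≤ ρR := by
    intro ξ hξ
    by_contra! h
    obtain ⟨η, h1, h2⟩ := far (R ξ - ρR) (by linarith) ξ
    have := hRmono ξ η hξ h1
    linarith [abs_nonneg (U η - uR), le_abs_self (R η - ρR)]
  have hρ : 0 < ρR := (hpos _).trans_le (hRle (uR + 1) le_rfl)
  have hpR := hp.2.2.2.1 ρR hρ
  have hflat : ∀ᵐ ξ, uR + 1 + deriv p ρR ≤ ξ → deriv R ξ = 0 ∧ deriv U ξ = 0 := by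
    filter_upwards [ode] with ξ ⟨R', U', h1, h2, h3, h4, h5⟩ hξ
    rw [h1.deriv, h2.deriv]
    have hd := hp.deriv_mono (hpos ξ) (hRle ξ (by linarith))
    have hs : 1 + deriv p ρR ≤ ξ - U ξ := by linarith [hUle ξ]
    have h6 : R ξ * (U' * ((ξ - U ξ) ^ 2 - deriv p (R ξ))) = 0 := by
      linear_combination deriv p (R ξ) * h4 - (ξ - U ξ) * h5
    have h7 : 0 < (ξ - U ξ) ^ 2 - deriv p (R ξ) := by nlinarith
    have h8 : U' = 0 := by
      rcases mul_eq_zero.1 h6 with h | h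
      · exact absurd h (hpos ξ).ne'
      · exact (mul_eq_zero.1 h).resolve_right h7.ne'
    refine ⟨?_, h8⟩
    rw [h8, mul_zero] at h4
    exact (mul_eq_zero.1 h4).resolve_right (by linarith)
  have hconst : ∀ (f : ℝ → ℝ) (K : NNReal), LipschitzWith K f →
      (∀ᵐ ξ, uR + 1 + deriv p ρR ≤ ξ → deriv f ξ = 0) →
      ∀ x y, uR + 1 + deriv p ρR ≤ x → x ≤ y → f x = f y := by
    intro f K hf hd x y hx hxy
    refine le_antisymm (le_of_ae_deriv hxy hf.lipschitzOnWith ?_) ?_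
    · filter_upwards [hd] with ξ h hξ
      exact (h (hx.trans hξ.1.le)).ge
    · have := le_of_ae_deriv hxy (f := fun x => -f x) hf.neg.lipschitzOnWith (by
        filter_upwards [hd] with ξ h hξ
        rw [deriv.fun_neg, h (hx.trans hξ.1.le), neg_zero])
      linarith
  refine ⟨uR + 1 + deriv p ρR, fun ξ hξ => ?_⟩
  have key : |R ξ - ρR| + |U ξ - uR| ≤ 0 := by
    refine le_of_forall_pos_lt_add fun ε hε => ?_
    obtain ⟨η, h1, h2⟩ := far ε hε ξ
    rw [hconst R KR hR (hflat.mono fun _ h h' => (h h').1) ξ η hξ h1,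
      hconst U KU hU (hflat.mono fun _ h h' => (h h').2) ξ η hξ h1, zero_add]
    exact h2
  have h1 := abs_nonneg (R ξ - ρR)
  have h2 := abs_nonneg (U ξ - uR)
  exact ⟨sub_eq_zero.1 (abs_eq_zero.1 (by linarith)), sub_eq_zero.1 (abs_eq_zero.1 (by linarith))⟩

/-- Since the initial data are attained in `L¹`, the profile comes arbitrarily close to the data
on any set `S` of positive measure. -/
lemma wave_near {T : ℝ} {p : ℝ → ℝ} {ρL ρR u1L u1R : ℝ} {R U : ℝ → ℝ}
    (hw : IsRarefactionWave T p ρL ρR u1L u1R R U) {S : Set (ℝ × ℝ)} (hS : MeasurableSet S)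
    (hSb : S ⊆ Ioo (-1) 1 ×ˢ Ioo (-1) 1) (hS0 : 0 < volume.real S) {ε : ℝ} (hε : 0 < ε) :
    ∀ᶠ t in 𝓝[>] (0:ℝ), ∃ x ∈ S,
      |R (x.1 / t) - riem ρL ρR x| + |U (x.1 / t) - riem u1L u1R x| < ε := by
  obtain ⟨KR, hR⟩ := hw.lipR
  obtain ⟨KU, hU⟩ := hw.lipU
  have hlim := hw.init 1 one_pos
  filter_upwards [hlim.eventually (gt_mem_nhds (mul_pos hε hS0)), self_mem_nhdsWithin]
    with t ht ht0
  by_contra! hcon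
  set B : Set (ℝ × ℝ) := Ioo (-1) 1 ×ˢ Ioo (-1) 1 with hB
  have hBvol : volume B < ⊤ := by
    rw [hB, Measure.volume_eq_prod, Measure.prod_prod]
    simp only [Real.volume_Ioo]
    exact ENNReal.mul_lt_top ENNReal.ofReal_lt_top ENNReal.ofReal_lt_top
  have hcont : ∀ f : ℝ → ℝ, Continuous f → IntegrableOn (fun x : ℝ × ℝ => f (x.1 / t)) B := by
    intro f hf
    have h : IntegrableOn (fun x : ℝ × ℝ => f (x.1 / t)) (Icc (-1) 1 ×ˢ Icc (-1) 1) := by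
      refine ContinuousOn.integrableOn_compact (isCompact_Icc.prod isCompact_Icc) ?_
      exact (hf.comp (by fun_prop)).continuousOn
    exact h.mono_set (prod_mono Ioo_subset_Icc_self Ioo_subset_Icc_self)
  have hriem : ∀ L R : ℝ, IntegrableOn (fun x : ℝ × ℝ => riem L R x) B := by
    intro L R
    refine Measure.integrableOn_of_bounded (M := |L| + |R|) hBvol.ne
      (measurable_riem L R).aestronglyMeasurable (ae_of_all _ fun x => ?_)
    simp only [riem, Real.norm_eq_abs]
    split_ifs
    · linarith [abs_nonneg R]
    · linarith [abs_nonneg L]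
  have hI : IntegrableOn (fun x : ℝ × ℝ =>
      |R (x.1 / t) - riem ρL ρR x| + |U (x.1 / t) - riem u1L u1R x|) B :=
    ((hcont R hR.continuous).sub (hriem _ _)).abs.add
      ((hcont U hU.continuous).sub (hriem _ _)).abs
  have h1 : ε * volume.real S ≤ ∫ x in S,
      (|R (x.1 / t) - riem ρL ρR x| + |U (x.1 / t) - riem u1L u1R x|) :=
    setIntegral_ge_of_const_le_real hS ((measure_mono hSb).trans_lt hBvol).ne hcon
      (hI.mono_set hSb)
  have h2 := setIntegral_mono_set hI (ae_of_all _ fun x => by positivity)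
    (LE.le.eventuallyLE hSb)
  linarith

/-- The profile equals the Riemann data outside a bounded interval. The left end is reduced to the
right one by the reflection `ξ ↦ -ξ`, `U ↦ -U`. -/
lemma wave_far {T : ℝ} {p : ℝ → ℝ} {ρL ρR u1L u1R : ℝ} {R U : ℝ → ℝ} (hT : 0 < T)
    (hp : PressureOK p) (hw : IsRarefactionWave T p ρL ρR u1L u1R R U) :
    ∃ M, 1 ≤ M ∧ (∀ ξ, M ≤ ξ → R ξ = ρR ∧ U ξ = u1R) ∧
      (∀ ξ, ξ ≤ -M → R ξ = ρL ∧ U ξ = u1L) := by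
  have ode := wave_ae hT hp hw
  obtain ⟨KR, hR⟩ := hw.lipR
  obtain ⟨KU, hU⟩ := hw.lipU
  obtain ⟨c, hc, hlow⟩ := hw.lower
  have hpos : ∀ ξ, 0 < R ξ := fun ξ => hc.trans_le (hlow ξ)
  have hvol : ∀ x y : ℝ, x + 1 / 2 = y →
      0 < volume.real (Ioo x y ×ˢ Ioo (0:ℝ) 1 : Set (ℝ × ℝ)) := by
    intro x y h
    rw [measureReal_def, Measure.volume_eq_prod, Measure.prod_prod, ENNReal.toReal_mul]
    simp only [Real.volume_Ioo]
    rw [← h]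
    norm_num
  have hsmall : ∀ ξ₀ : ℝ, ∀ᶠ t in 𝓝[>] (0:ℝ), t < (2 * (|ξ₀| + 1))⁻¹ := fun ξ₀ =>
    mem_nhdsWithin_of_mem_nhds (gt_mem_nhds (by positivity))
  have hlarge : ∀ ξ₀ t x : ℝ, 0 < t → t < (2 * (|ξ₀| + 1))⁻¹ → 1 / 2 < x → ξ₀ ≤ x / t := by
    intro ξ₀ t x ht h1 h2
    have h3 := abs_nonneg ξ₀
    rw [lt_inv_comm₀ ht (by positivity)] at h1
    have h4 : t⁻¹ * (1 / 2) ≤ t⁻¹ * x := by gcongr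
    rw [div_eq_inv_mul]
    linarith [le_abs_self ξ₀]
  obtain ⟨M1, hM1⟩ := wave_right (ρR := ρR) (uR := u1R) hp hR hU hw.monoU hpos ode (by
    intro ε hε ξ₀
    have h := wave_near hw (S := Ioo (1 / 2) 1 ×ˢ Ioo 0 1)
      (measurableSet_Ioo.prod measurableSet_Ioo)
      (prod_mono (Ioo_subset_Ioo (by norm_num) le_rfl) (Ioo_subset_Ioo (by norm_num) le_rfl))
      (hvol _ _ (by norm_num)) hε
    obtain ⟨t, ⟨x, hx, h1⟩, h2, ht⟩ := (h.and ((hsmall ξ₀).and self_mem_nhdsWithin)).exists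
    have hx1 : 1 / 2 < x.1 := hx.1.1
    refine ⟨x.1 / t, hlarge ξ₀ t x.1 ht h2 hx1, ?_⟩
    simpa only [riem, if_neg (show ¬ x.1 ≤ 0 by linarith)] using h1)
  have hneg : LipschitzWith 1 (fun y : ℝ => -y) := LipschitzWith.id.neg
  obtain ⟨M2, hM2⟩ := wave_right (R := fun y => R (-y)) (U := fun y => -U (-y)) (ρR := ρL)
    (uR := -u1L) (KR := KR) (KU := KU) hp
    (by simpa [Function.comp_def] using hR.comp hneg)
    (by have h := (hU.comp hneg).neg
        rw [mul_one] at h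
        exact h)
    (fun x y h => neg_le_neg (hw.monoU (neg_le_neg h))) (fun ξ => hpos _)
    (by
      have hq : Measure.QuasiMeasurePreserving (fun y : ℝ => -y) volume volume :=
        (Measure.measurePreserving_neg volume).quasiMeasurePreserving
      filter_upwards [hq.ae ode] with ξ h using h.reflect)
    (by
    intro ε hε ξ₀
    have h := wave_near hw (S := Ioo (-1) (-(1 / 2)) ×ˢ Ioo 0 1)
      (measurableSet_Ioo.prod measurableSet_Ioo)
      (prod_mono (Ioo_subset_Ioo le_rfl (by norm_num)) (Ioo_subset_Ioo (by norm_num) le_rfl))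
      (hvol _ _ (by norm_num)) hε
    obtain ⟨t, ⟨x, hx, h1⟩, h2, ht⟩ := (h.and ((hsmall ξ₀).and self_mem_nhdsWithin)).exists
    have hx1 : x.1 < -(1 / 2) := hx.1.2
    refine ⟨-x.1 / t, hlarge ξ₀ t (-x.1) ht h2 (by linarith), ?_⟩
    have e : -(-x.1 / t) = x.1 / t := by ring
    simp only [riem, if_pos (show x.1 ≤ 0 by linarith)] at h1
    rw [e]
    rwa [show -U (x.1 / t) - -u1L = -(U (x.1 / t) - u1L) by ring, abs_neg])
  refine ⟨max 1 (max M1 M2), le_max_left _ _, fun ξ hξ => ?_, fun ξ hξ => ?_⟩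
  · exact hM1 ξ ((le_max_left _ _).trans ((le_max_right _ _).trans hξ))
  · have h := hM2 (-ξ) ((le_max_right M1 _).trans ((le_max_right _ _).trans (by linarith)))
    simp only [neg_neg, neg_inj] at h
    exact h

/-! ### Sign of the boundary flux -/

lemma lipschitzOn_comp_wave {G : ℝ × ℝ × ℝ → ℝ} {R U : ℝ → ℝ} {KR KU : NNReal}
    (hR : LipschitzWith KR R) (hU : LipschitzWith KU U)
    (hG : ∀ ξ, ContDiffAt ℝ 1 G (ξ, R ξ, U ξ)) (x y : ℝ) :
    ∃ K, LipschitzOnWith K (fun ξ => G (ξ, R ξ, U ξ)) (Icc x y) := by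
  refine LocallyLipschitzOn.exists_lipschitzOnWith_of_compact isCompact_Icc ?_
  intro ξ _
  have hγ : LipschitzWith (max 1 (max KR KU)) (fun ξ : ℝ => (ξ, R ξ, U ξ)) :=
    LipschitzWith.id.prodMk (hR.prodMk hU)
  obtain ⟨K, t, ht, hK⟩ := (hG ξ).exists_lipschitzOnWith
  refine ⟨K * max 1 (max KR KU), (fun ξ : ℝ => (ξ, R ξ, U ξ)) ⁻¹' t,
    mem_nhdsWithin_of_mem_nhds (hγ.continuous.continuousAt ht), ?_⟩
  exact hK.comp hγ.lipschitzOnWith (mapsTo_preimage _ _)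

/-- A function of the profile is globally Lipschitz and bounded, since the profile is constant
outside a bounded interval. -/
lemma lipschitz_comp_wave {G : ℝ × ℝ × ℝ → ℝ} {R U : ℝ → ℝ} {KR KU : NNReal}
    (hR : LipschitzWith KR R) (hU : LipschitzWith KU U)
    (hG : ∀ ξ, ContDiffAt ℝ 1 G (ξ, R ξ, U ξ)) {M gL gR : ℝ} (hM : 1 ≤ M)
    (hgR : ∀ ξ, M ≤ ξ → G (ξ, R ξ, U ξ) = gR) (hgL : ∀ ξ ≤ -M, G (ξ, R ξ, U ξ) = gL) :
    (∃ K, LipschitzWith K (fun ξ => G (ξ, R ξ, U ξ))) ∧ ∃ C, ∀ ξ, |G (ξ, R ξ, U ξ)| ≤ C := by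
  obtain ⟨K, hK⟩ := lipschitzOn_comp_wave hR hU hG (-M) M
  have hMM : -M ≤ M := by linarith
  have hK' := hK.to_restrict
  have he : (fun ξ => G (ξ, R ξ, U ξ)) =
      (Icc (-M) M).domRestrict (fun ξ => G (ξ, R ξ, U ξ)) ∘ projIcc (-M) M hMM := by
    ext ξ
    simp only [Function.comp, domRestrict_apply]
    rcases le_total M ξ with h | h
    · rw [projIcc_of_right_le _ h, hgR ξ h, hgR M le_rfl]
    · rcases le_total ξ (-M) with h' | h'
      · rw [projIcc_of_le_left _ h', hgL ξ h', hgL (-M) le_rfl]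
      · rw [projIcc_of_mem _ ⟨h', h⟩]
  refine ⟨⟨K * 1, ?_⟩, ?_⟩
  · rw [he]
    exact hK'.comp (LipschitzWith.projIcc hMM)
  · obtain ⟨D, hD⟩ := isCompact_Icc.exists_bound_of_continuousOn hK.continuousOn
    refine ⟨D, fun ξ => ?_⟩
    have h := hD _ (projIcc (-M) M hMM ξ).2
    have h2 := congrFun he ξ
    simp only [Function.comp, domRestrict_apply] at h2
    rw [h2]
    exact h

/-- Elimination of `R'` from the two profile equations. -/
lemma sq_of_ode {p R U : ℝ → ℝ} {ξ R' U' : ℝ} (hpos : 0 < R ξ)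
    (h4 : R' * (ξ - U ξ) = R ξ * U') (h5 : deriv p (R ξ) * R' = R ξ * (ξ - U ξ) * U') :
    (ξ - U ξ) ^ 2 * U' = deriv p (R ξ) * U' := by
  have : R ξ * ((ξ - U ξ) ^ 2 * U' - deriv p (R ξ) * U') = 0 := by
    linear_combination deriv p (R ξ) * h4 - (ξ - U ξ) * h5
  have := (mul_eq_zero.1 this).resolve_left hpos.ne'
  linarith

/-- The relative energy of a constant state `(r, v)` with respect to the state `(s, w)`, in which
`s H'(s) - H(s)` is replaced by `p(s)`. -/
noncomputable def cE (p : ℝ → ℝ) (r v s w : ℝ) : ℝ :=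
  1 / 2 * r * (v - w) ^ 2 + Hfun p r - dH p s * r + p s

/-- The flux through the ray `x₁ = ξ t` of the relative energy of `(r, v)` with respect to
the profile. -/
noncomputable def cD (p R U : ℝ → ℝ) (r v ξ : ℝ) : ℝ :=
  (v - ξ) * cE p r v (R ξ) (U ξ) + (p r - p (R ξ)) * (v - U ξ)

lemma cE_nonneg {p : ℝ → ℝ} (hp : PressureOK p) {r v s w : ℝ} (hr : 0 < r) (hs : 0 < s) :
    0 ≤ cE p r v s w := by
  have h1 := hp.H_tangent hs hr
  have h2 : 0 ≤ 1 / 2 * r * (v - w) ^ 2 := by positivity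
  unfold cE
  linarith

/-- The relative energy flux through a ray decreases with `ξ`: the derivative of `-cD` is `cE` plus
`U'` times `r (v - U)² + p(r) - p'(R)(r - R) - p(R)`, and both are nonnegative. -/
lemma cD_antitone {p R U : ℝ → ℝ} {KR KU : NNReal} (hp : PressureOK p)
    (hR : LipschitzWith KR R) (hU : LipschitzWith KU U) (hpos : ∀ ξ, 0 < R ξ)
    (ode : ∀ᵐ ξ, WavePt p R U ξ) {r v : ℝ} (hr : 0 < r) {x y : ℝ} (hxy : x ≤ y) :
    cD p R U r v y ≤ cD p R U r v x := by
  let G : ℝ × ℝ × ℝ → ℝ := fun q => (v - q.1) * (1 / 2 * r * (v - q.2.2) ^ 2 + Hfun p r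
    - dH p q.2.1 * r + p q.2.1) + (p r - p q.2.1) * (v - q.2.2)
  have hG : ∀ ξ, ContDiffAt ℝ 1 G (ξ, R ξ, U ξ) := by
    intro ξ
    have a1 : ContDiffAt ℝ 1 (fun q : ℝ × ℝ × ℝ => p q.2.1) (ξ, R ξ, U ξ) :=
      ContDiffAt.comp (ξ, R ξ, U ξ) (g := p) (hp.contDiffAt (hpos ξ)) (by fun_prop)
    have a2 : ContDiffAt ℝ 1 (fun q : ℝ × ℝ × ℝ => dH p q.2.1) (ξ, R ξ, U ξ) :=
      ContDiffAt.comp (ξ, R ξ, U ξ) (g := dH p) (hp.contDiffAt_dH (hpos ξ)) (by fun_prop)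
    have a3 : ContDiffAt ℝ 1 (fun q : ℝ × ℝ × ℝ => 1 / 2 * r * (v - q.2.2) ^ 2 + Hfun p r)
        (ξ, R ξ, U ξ) := by fun_prop
    have a4 : ContDiffAt ℝ 1 (fun q : ℝ × ℝ × ℝ => v - q.1) (ξ, R ξ, U ξ) := by fun_prop
    have a5 : ContDiffAt ℝ 1 (fun q : ℝ × ℝ × ℝ => v - q.2.2) (ξ, R ξ, U ξ) := by fun_prop
    exact (a4.mul ((a3.sub (a2.mul contDiffAt_const)).add a1)).add
      ((contDiffAt_const.sub a1).mul a5)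
  obtain ⟨K, hK⟩ := lipschitzOn_comp_wave hR hU hG x y
  have hK' : LipschitzOnWith K (fun ξ => cD p R U r v ξ) (Icc x y) := hK
  have := le_of_ae_deriv hxy hK'.neg (by
    filter_upwards [ode] with ξ ⟨R', U', h1, h2, h3, h4, h5⟩ _
    have hsq := sq_of_ode (hpos ξ) h4 h5
    have b1 := (hp.hasDerivAt (hpos ξ)).comp ξ h1
    have b2 := (hp.hasDerivAt_dH (hpos ξ)).comp ξ h1
    have b3 := (((((h2.const_sub v).pow 2).const_mul (1 / 2 * r)).add_const (Hfun p r)).sub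
      (b2.mul_const r)).add b1
    have b4 := (((hasDerivAt_id ξ).const_sub v).mul b3).add
      ((b1.const_sub (p r)).mul (h2.const_sub v))
    have b5 : HasDerivAt (fun ξ => cD p R U r v ξ) _ ξ := b4
    rw [b5.neg.deriv]
    have hE := cE_nonneg hp (v := v) (w := U ξ) hr (hpos ξ)
    have ht := hp.tangent (hpos ξ) hr.le
    have hq : 0 ≤ U' * (r * (v - U ξ) ^ 2 + (p r - deriv p (R ξ) * (r - R ξ) - p (R ξ))) := by
      positivity
    have h6 : deriv p (R ξ) / R ξ * R' = (ξ - U ξ) * U' := by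
      have := (hpos ξ).ne'
      field_simp
      linarith
    refine (add_nonneg hE hq).trans (le_of_eq ?_)
    simp only [cE, Function.comp, Pi.pow_apply, Pi.add_apply, Pi.sub_apply, id]
    push_cast
    linear_combination -((v - ξ) * r) * h6 - (ξ - U ξ) * h5 + (r - R ξ) * hsq)
  simp only [Pi.neg_apply] at this
  linarith

/-- Sign of the relative energy flux at a vertical boundary to the right. It equals `cD + ξ cE`, and
`cD` is antitone and vanishes for large `ξ`, where the profile equals `(r, v)`. -/
lemma flux_right {p R U : ℝ → ℝ} {KR KU : NNReal} (hp : PressureOK p)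
    (hR : LipschitzWith KR R) (hU : LipschitzWith KU U) (hpos : ∀ ξ, 0 < R ξ)
    (ode : ∀ᵐ ξ, WavePt p R U ξ) {r v M : ℝ} (hr : 0 < r)
    (hM : ∀ ξ, M ≤ ξ → R ξ = r ∧ U ξ = v) {ξ : ℝ} (hξ : 0 ≤ ξ) :
    0 ≤ v * cE p r v (R ξ) (U ξ) + (p r - p (R ξ)) * (v - U ξ) := by
  have h1 := cD_antitone hp hR hU hpos ode (r := r) (v := v) hr (le_max_left ξ M)
  obtain ⟨e1, e2⟩ := hM _ (le_max_right ξ M)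
  have hH := PressureOK.H_eq (p := p) hr
  have h0 : cD p R U r v (max ξ M) = 0 := by
    simp only [cD, cE, e1, e2]
    rw [hH]
    ring
  have hE := mul_nonneg hξ (cE_nonneg hp (v := v) (w := U ξ) hr (hpos ξ))
  rw [h0] at h1
  unfold cD at h1
  linarith

/-- Sign of the relative energy flux at a vertical boundary to the left, where it equals `cD + ξ cE`
with `ξ ≤ 0` and `cD ≤ 0`. -/
lemma flux_left {p R U : ℝ → ℝ} {KR KU : NNReal} (hp : PressureOK p)
    (hR : LipschitzWith KR R) (hU : LipschitzWith KU U) (hpos : ∀ ξ, 0 < R ξ)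
    (ode : ∀ᵐ ξ, WavePt p R U ξ) {r v M : ℝ} (hr : 0 < r)
    (hM : ∀ ξ, ξ ≤ -M → R ξ = r ∧ U ξ = v) {ξ : ℝ} (hξ : ξ ≤ 0) :
    v * cE p r v (R ξ) (U ξ) + (p r - p (R ξ)) * (v - U ξ) ≤ 0 := by
  have h1 := cD_antitone hp hR hU hpos ode (r := r) (v := v) hr (min_le_left ξ (-M))
  obtain ⟨e1, e2⟩ := hM _ (min_le_right ξ (-M))
  have hH := PressureOK.H_eq (p := p) hr
  have h0 : cD p R U r v (min ξ (-M)) = 0 := by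
    simp only [cD, cE, e1, e2]
    rw [hH]
    ring
  have hE := mul_nonneg (neg_nonneg.2 hξ) (cE_nonneg hp (v := v) (w := U ξ) hr (hpos ξ))
  rw [h0] at h1
  unfold cD at h1
  linarith

/-! ### The four balance laws -/

/-- An iterated integral over `(0,τ)` and `Ω` is the integral of any integrable representative
of the integrand against `nu`. -/
lemma iter_eq {a τ : ℝ} (hτ : 0 < τ) {g g' : ℝ → ℝ × ℝ → ℝ}
    (h : ∀ᵐ z ∂(nu a τ), g z.1 z.2 = g' z.1 z.2)
    (hI : Integrable (fun z => g' z.1 z.2) (nu a τ)) :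
    ∫ t in (0:ℝ)..τ, ∫ x in Dom a, g t x = ∫ z, g' z.1 z.2 ∂(nu a τ) := by
  have hI' : Integrable (fun z => g z.1 z.2) (nu a τ) :=
    hI.congr (h.mono fun z hz => hz.symm)
  rw [← integral_congr_ae h, intervalIntegral.integral_of_le hτ.le]
  exact (integral_prod _ hI').symm

lemma measurable_deriv_t {φ : ℝ × ℝ → ℝ} (hφ : ContDiff ℝ 1 φ) :
    Measurable (Function.uncurry fun t x => deriv (fun s => φ (s, x)) t) := by
  have h := measurable_deriv_with_param (f := fun x s => φ (s, x))
    (by exact hφ.continuous.comp (by fun_prop : Continuous fun z : ℝ × ℝ => (z.2, z.1)))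
  exact h.comp measurable_swap

lemma measurable_deriv_x {φ : ℝ × ℝ → ℝ} (hφ : ContDiff ℝ 1 φ) :
    Measurable (Function.uncurry fun t x => deriv (fun y => φ (t, y)) x) :=
  measurable_deriv_with_param (f := fun t y => φ (t, y)) hφ.continuous

/-- Conservation of mass tested with functions independent of `x₂`. -/
lemma mass_law {T a τ : ℝ} {p : ℝ → ℝ} {ρL ρR u1L u1R : ℝ} {ρ : ℝ → ℝ × ℝ → ℝ}
    {u : ℝ → ℝ × ℝ → ℝ × ℝ} (ha : 0 < a) (hτ : 0 < τ)
    (hsol : IsAdmissibleWeakSol T a p ρL ρR u1L u1R ρ u)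
    (h1 : ∀ φ : ℝ → ℝ × ℝ → ℝ, IsTest φ →
      (∫ x in Dom a, (ρ τ x * φ τ x - riem ρL ρR x * φ 0 x)) +
        (∫ t in (0:ℝ)..τ, ∫ s in (0:ℝ)..1,
          (ρR * u1R * φ t (a, s) - ρL * u1L * φ t (-a, s)))
      = ∫ t in (0:ℝ)..τ, ∫ x in Dom a,
          (ρ t x * pdt φ t x
            + ρ t x * ((u t x).1 * pd1 (φ t) x + (u t x).2 * pd2 (φ t) x))) :
    BalanceLaw a τ ρ (fun t x => ρ t x * (u t x).1) ρL ρR (ρL * u1L) (ρR * u1R) := by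
  obtain ⟨C, hC⟩ := hsol.bdd
  have hC0 : 0 ≤ C := (abs_nonneg _).trans (hC 0 0).1
  have mB : Measurable (Function.uncurry fun t x => ρ t x * (u t x).1) :=
    hsol.meas_ρ.mul (measurable_fst.comp hsol.meas_u)
  have bd : ∃ C, ∀ t x, |ρ t x| ≤ C ∧ |ρ t x * (u t x).1| ≤ C := by
    refine ⟨C + C * C, fun t x => ⟨?_, ?_⟩⟩
    · linarith [(hC t x).1, mul_nonneg hC0 hC0]
    · rw [abs_mul]
      have h2 : |(u t x).1| ≤ C := (norm_fst_le (u t x)).trans (hC t x).2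
      have := mul_le_mul (hC t x).1 h2 (abs_nonneg _) hC0
      linarith
  refine ⟨hsol.meas_ρ, mB, bd, fun φ hφ hb => ?_⟩
  obtain ⟨D, hD⟩ := hb
  have key := h1 (fun t x => φ (t, x.1)) ⟨hφ.comp
    (by fun_prop : ContDiff ℝ 1 fun z : ℝ × (ℝ × ℝ) => (z.1, z.2.1)), fun t x y => rfl⟩
  unfold Holds
  simp only [intervalIntegral.integral_const, sub_zero, one_smul] at key
  rw [key]
  refine iter_eq hτ (g' := fun t x => ρ t x * deriv (fun s => φ (s, x.1)) t +
      ρ t x * (u t x).1 * deriv (fun y => φ (t, y)) x.1) (ae_of_all _ fun z => ?_) ?_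
  · simp only [pdt, pd1, pd2, deriv_const]
    ring
  · exact integrable_fields ha hτ hsol.meas_ρ mB bd (measurable_deriv_t hφ)
      (measurable_deriv_x hφ) hD

/-- Balance of the first momentum component, tested with functions independent of `x₂`. -/
lemma momentum_law {T a τ : ℝ} {p : ℝ → ℝ} {ρL ρR u1L u1R : ℝ} {ρ : ℝ → ℝ × ℝ → ℝ}
    {u : ℝ → ℝ × ℝ → ℝ × ℝ} (ha : 0 < a) (hτ : 0 < τ) (hp : PressureOK p)
    (hsol : IsAdmissibleWeakSol T a p ρL ρR u1L u1R ρ u)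
    (hnn : ∀ᵐ z ∂(nu a τ), 0 ≤ ρ z.1 z.2)
    (h2 : ∀ φ : ℝ → ℝ × ℝ → ℝ × ℝ, IsTestV φ →
      (∫ x in Dom a, (ρ τ x * dot (u τ x) (φ τ x)
          - riem ρL ρR x * dot (riem u1L u1R x, 0) (φ 0 x))) +
        (∫ t in (0:ℝ)..τ, ∫ s in (0:ℝ)..1,
          (ρR * u1R * dot (u1R, 0) (φ t (a, s)) - ρL * u1L * dot (u1L, 0) (φ t (-a, s)))) +
        (∫ t in (0:ℝ)..τ, ∫ s in (0:ℝ)..1,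
          (p ρR * (φ t (a, s)).1 - p ρL * (φ t (-a, s)).1))
      = ∫ t in (0:ℝ)..τ, ∫ x in Dom a,
          (ρ t x * dot (u t x) (deriv (fun τ' => φ τ' x) t)
            + ρ t x * ((u t x).1 * (u t x).1 * pd1 (fun y => (φ t y).1) x
              + (u t x).2 * (u t x).1 * pd2 (fun y => (φ t y).1) x
              + (u t x).1 * (u t x).2 * pd1 (fun y => (φ t y).2) x
              + (u t x).2 * (u t x).2 * pd2 (fun y => (φ t y).2) x)
            + p (ρ t x) * (pd1 (fun y => (φ t y).1) x + pd2 (fun y => (φ t y).2) x))) :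
    BalanceLaw a τ (fun t x => ρ t x * (u t x).1)
      (fun t x => ρ t x * (u t x).1 ^ 2 + p (max (ρ t x) 0)) (ρL * u1L) (ρR * u1R)
      (ρL * u1L ^ 2 + p ρL) (ρR * u1R ^ 2 + p ρR) := by
  obtain ⟨C, hC⟩ := hsol.bdd
  have hC0 : 0 ≤ C := (abs_nonneg _).trans (hC 0 0).1
  obtain ⟨P, hP⟩ := hp.p_bound C
  have hu : ∀ t x, |(u t x).1| ≤ C := fun t x => (norm_fst_le (u t x)).trans (hC t x).2
  have mu : Measurable (fun z : ℝ × (ℝ × ℝ) => (u z.1 z.2).1) := measurable_fst.comp hsol.meas_u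
  have mA : Measurable (Function.uncurry fun t x => ρ t x * (u t x).1) := hsol.meas_ρ.mul mu
  have mB : Measurable (Function.uncurry fun t x => ρ t x * (u t x).1 ^ 2 + p (max (ρ t x) 0)) :=
    (hsol.meas_ρ.mul (mu.pow_const 2)).add (hp.continuous_p.measurable.comp hsol.meas_ρ)
  have bd : ∃ C, ∀ t x, |ρ t x * (u t x).1| ≤ C ∧
      |ρ t x * (u t x).1 ^ 2 + p (max (ρ t x) 0)| ≤ C := by
    refine ⟨C * C + C * C ^ 2 + |P|, fun t x => ⟨?_, ?_⟩⟩
    · rw [abs_mul]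
      have := mul_le_mul (hC t x).1 (hu t x) (abs_nonneg _) hC0
      have : 0 ≤ C * C ^ 2 := by positivity
      linarith [abs_nonneg P]
    · refine (abs_add_le _ _).trans ?_
      rw [abs_mul, abs_pow]
      have := mul_le_mul (hC t x).1 (pow_le_pow_left₀ (abs_nonneg _) (hu t x) 2)
        (by positivity) hC0
      linarith [hP _ (hC t x).1, le_abs_self P, mul_nonneg hC0 hC0]
  refine ⟨mA, mB, bd, fun φ hφ hb => ?_⟩
  obtain ⟨D, hD⟩ := hb
  have key := h2 (fun t x => (φ (t, x.1), 0)) ⟨(hφ.comp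
    (by fun_prop : ContDiff ℝ 1 fun z : ℝ × (ℝ × ℝ) => (z.1, z.2.1))).prodMk contDiff_const,
      fun t x y => rfl⟩
  have hdφ : ∀ t x, deriv (fun s => ((φ (s, x), 0) : ℝ × ℝ)) t =
      (deriv (fun s => φ (s, x)) t, 0) := by
    intro t x
    have hd : DifferentiableAt ℝ (fun s => φ (s, x)) t :=
      ((hφ.differentiable one_ne_zero) (t, x)).comp t
        (by fun_prop : DifferentiableAt ℝ (fun s => (s, x)) t)
    exact (hd.hasDerivAt.prodMk (hasDerivAt_const t (0:ℝ))).deriv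
  have hφc := hφ.continuous
  have ii : ∀ c d : ℝ, IntervalIntegrable (fun t => c * φ (t, a) - d * φ (t, -a)) volume 0 τ :=
    fun c d => Continuous.intervalIntegrable (by fun_prop) _ _
  unfold Holds
  simp only [intervalIntegral.integral_const, sub_zero, one_smul, dot, mul_zero, add_zero] at key
  rw [add_assoc, ← intervalIntegral.integral_add] at key
  rotate_left
  · simpa only [mul_assoc] using ii (ρR * (u1R * u1R)) (ρL * (u1L * u1L))
  · exact ii _ _
  have e1 : (∫ x in Dom a, (ρ τ x * (u τ x).1 * φ (τ, x.1) -
        riem (ρL * u1L) (ρR * u1R) x * φ (0, x.1))) =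
      ∫ x in Dom a, (ρ τ x * ((u τ x).1 * φ (τ, x.1)) -
        riem ρL ρR x * (riem u1L u1R x * φ (0, x.1))) := by
    refine integral_congr_ae (ae_of_all _ fun x => ?_)
    simp only [riem]
    split_ifs <;> ring
  have e2 : (∫ t in (0:ℝ)..τ, ((ρR * u1R ^ 2 + p ρR) * φ (t, a) -
        (ρL * u1L ^ 2 + p ρL) * φ (t, -a))) =
      ∫ t in (0:ℝ)..τ, ((ρR * u1R * (u1R * φ (t, a)) - ρL * u1L * (u1L * φ (t, -a))) +
        (p ρR * φ (t, a) - p ρL * φ (t, -a))) := by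
    refine intervalIntegral.integral_congr fun t _ => ?_
    ring
  rw [e1, e2, key]
  refine iter_eq hτ (g' := fun t x => ρ t x * (u t x).1 * deriv (fun s => φ (s, x.1)) t +
      (ρ t x * (u t x).1 ^ 2 + p (max (ρ t x) 0)) * deriv (fun y => φ (t, y)) x.1) ?_ ?_
  · filter_upwards [hnn] with z hz
    simp only [hdφ, pd1, pd2, deriv_const, max_eq_left hz]
    ring
  · exact integrable_fields ha hτ mA mB bd (measurable_deriv_t hφ) (measurable_deriv_x hφ) hD

/-- The identity for `∫∫ ∂_t φ`, written as a balance law. -/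
lemma time_law {a τ : ℝ} (ha : 0 < a) (hτ : 0 < τ) :
    BalanceLaw a τ (fun _ _ => 1) (fun _ _ => 0) 1 1 0 0 := by
  have bd : ∃ C, ∀ (_ : ℝ) (_ : ℝ × ℝ), |(1:ℝ)| ≤ C ∧ |(0:ℝ)| ≤ C := ⟨1, by simp⟩
  refine ⟨measurable_const, measurable_const, bd, fun φ hφ ⟨D, hD⟩ => ?_⟩
  have hI := integrable_fields ha hτ (A := fun _ _ => 1) (B := fun _ _ => 0) measurable_const
    measurable_const bd (measurable_deriv_t hφ) (measurable_deriv_x hφ) hD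
  have hd : ∀ x, ContDiff ℝ 1 (fun s => φ (s, x)) := fun x => hφ.comp (by fun_prop)
  unfold Holds
  simp only [riem, ite_self, one_mul, zero_mul, sub_zero, add_zero,
    intervalIntegral.integral_zero] at hI ⊢
  unfold nu at hI ⊢
  rw [integral_prod_symm _ hI]
  refine integral_congr_ae (ae_of_all _ fun x => ?_)
  dsimp only
  rw [← intervalIntegral.integral_of_le hτ.le, intervalIntegral.integral_deriv_eq_sub
    (fun t _ => (hd x.1).differentiable one_ne_zero t)
    (((hd x.1).continuous_deriv le_rfl).intervalIntegrable _ _)]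

/-- The identity for `∫∫ ∂_{x₁} φ`, written as a balance law. -/
lemma space_law {a τ : ℝ} (ha : 0 < a) (hτ : 0 < τ) :
    BalanceLaw a τ (fun _ _ => 0) (fun _ _ => 1) 0 0 1 1 := by
  have bd : ∃ C, ∀ (_ : ℝ) (_ : ℝ × ℝ), |(0:ℝ)| ≤ C ∧ |(1:ℝ)| ≤ C := ⟨1, by simp⟩
  refine ⟨measurable_const, measurable_const, bd, fun φ hφ ⟨D, hD⟩ => ?_⟩
  have hI := integrable_fields ha hτ (A := fun _ _ => 0) (B := fun _ _ => 1) measurable_const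
    measurable_const bd (measurable_deriv_t hφ) (measurable_deriv_x hφ) hD
  have hd : ∀ t, ContDiff ℝ 1 (fun y => φ (t, y)) := fun x => hφ.comp (by fun_prop)
  unfold Holds
  simp only [riem, ite_self, one_mul, zero_mul, sub_zero, zero_add, integral_zero] at hI ⊢
  unfold nu at hI ⊢
  rw [integral_prod _ hI, intervalIntegral.integral_of_le hτ.le]
  refine integral_congr_ae (ae_of_all _ fun t => ?_)
  dsimp only
  rw [restrict_Dom, integral_fun_fst (fun y => deriv (fun y' => φ (t, y')) y),
    ← integral_Ioc_eq_integral_Ioo,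
    ← intervalIntegral.integral_of_le (by linarith), intervalIntegral.integral_deriv_eq_sub
    (fun y _ => (hd t).differentiable one_ne_zero y)
    (((hd t).continuous_deriv le_rfl).intervalIntegrable _ _)]
  simp

/-! ### Balance laws tested with the profile -/

/-- A bounded Lipschitz function with the constant values `ψL` on `(-∞,-M]` and `ψR` on
`[M,∞)`. -/
def Profile (M : ℝ) (ψ : ℝ → ℝ) (ψL ψR : ℝ) : Prop :=
  ((∃ K, LipschitzWith K ψ) ∧ ∃ C, ∀ ξ, |ψ ξ| ≤ C) ∧
    (∀ ξ ≤ -M, ψ ξ = ψL) ∧ ∀ ξ, M ≤ ξ → ψ ξ = ψR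

lemma integrable_dom_mul {a : ℝ} {f g : ℝ × ℝ → ℝ} (mf : Measurable f) (mg : Measurable g)
    {C D : ℝ} (hf : ∀ x, |f x| ≤ C) (hg : ∀ x, |g x| ≤ D) :
    Integrable (fun x => f x * g x) (volume.restrict (Dom a)) := by
  refine Integrable.of_bound (mf.mul mg).aestronglyMeasurable (C * D) (ae_of_all _ fun x => ?_)
  rw [Real.norm_eq_abs, abs_mul]
  exact mul_le_mul (hf x) (hg x) (abs_nonneg _) ((abs_nonneg _).trans (hf x))

/-- A balance law may be tested with the self-similar function `ψ(x₁/t)`, and all the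
terms are integrable. -/
lemma BalanceLaw.profile {a τ : ℝ} {A B : ℝ → ℝ × ℝ → ℝ} {AL AR FL FR : ℝ}
    (hb : BalanceLaw a τ A B AL AR FL FR) (ha : 0 < a) (hτ : 0 < τ) {M : ℝ} (hM : 1 ≤ M)
    {ψ : ℝ → ℝ} {ψL ψR : ℝ} (hψ : Profile M ψ ψL ψR) :
    Holds a τ A B AL AR FL FR (fun t x => ψ (x / t)) (fun x => if x ≤ 0 then ψL else ψR)
      (fun t x => -(deriv ψ (x / t) * (x / t) / t)) (fun t x => deriv ψ (x / t) / t) ∧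
    Integrable (fun x => A τ x * ψ (x.1 / τ) - riem AL AR x * (if x.1 ≤ 0 then ψL else ψR))
      (volume.restrict (Dom a)) ∧
    IntervalIntegrable (fun t => FR * ψ (a / t) - FL * ψ (-a / t)) volume 0 τ ∧
    Integrable (fun z : ℝ × (ℝ × ℝ) =>
      A z.1 z.2 * -(deriv ψ (z.2.1 / z.1) * (z.2.1 / z.1) / z.1) +
        B z.1 z.2 * (deriv ψ (z.2.1 / z.1) / z.1)) (nu a τ) := by
  obtain ⟨⟨⟨K, hK⟩, ⟨C, hC⟩⟩, hL, hR⟩ := hψ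
  obtain ⟨D, hD⟩ := hb.bdd
  have mψ : Measurable ψ := hK.continuous.measurable
  have md : Measurable (deriv ψ) := measurable_deriv ψ
  have hdK : ∀ ξ, |deriv ψ ξ| ≤ K := fun ξ => norm_deriv_le_of_lipschitz hK
  refine ⟨hb.holds_Lip ha hτ hK hM hL hR hC, ?_, ?_, ?_⟩
  · refine Integrable.sub ?_ ?_
    · exact integrable_dom_mul (hb.measA.comp (by fun_prop : Measurable (fun x => (τ, x))))
        (by fun_prop) (fun x => (hD τ x).1) (fun x => hC _)
    · refine integrable_dom_mul (measurable_riem _ _)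
        (Measurable.ite (measurableSet_le measurable_fst measurable_const) measurable_const
          measurable_const) (abs_riem_le AL AR) (D := |ψL| + |ψR|) (fun x => ?_)
      split_ifs <;> linarith [abs_nonneg ψL, abs_nonneg ψR]
  · have h1 : ∀ c : ℝ, IntervalIntegrable (fun t => ψ (c / t)) volume 0 τ := by
      intro c
      rw [intervalIntegrable_iff_integrableOn_Ioc_of_le hτ.le]
      exact Integrable.of_bound
        (mψ.comp (measurable_const.div measurable_id)).aestronglyMeasurable C
        (ae_of_all _ fun t => hC _)
    exact ((h1 a).const_mul FR).sub ((h1 (-a)).const_mul FL)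
  · refine hb.integrable ha hτ (C := K * M * M)
      (ft := fun t x => -(deriv ψ (x / t) * (x / t) / t)) (fx := fun t x => deriv ψ (x / t) / t)
      ?_ ?_ ?_
    · show Measurable fun z : ℝ × ℝ => -(deriv ψ (z.2 / z.1) * (z.2 / z.1) / z.1)
      fun_prop
    · show Measurable fun z : ℝ × ℝ => deriv ψ (z.2 / z.1) / z.1
      fun_prop
    · filter_upwards [ae_nu a τ] with z hz
      obtain ⟨k1, k2⟩ := kernel_bound hM hdK (deriv_zero_of_const hL hR) hz.1 le_rfl hz.2.2.1
      rw [abs_neg, abs_div, abs_div, abs_mul, abs_of_pos hz.1]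
      refine ⟨k2, k1.trans ?_⟩
      have h0 : (0:ℝ) ≤ K * M * maj z := by unfold maj; positivity
      have h1 : K * M * maj z * 1 ≤ K * M * maj z * M := by gcongr
      calc K * M * ((√z.1)⁻¹ * (√|z.2.1|)⁻¹) = K * M * maj z * 1 := by rw [mul_one]; rfl
        _ ≤ K * M * maj z * M := h1
        _ = _ := by ring

/-- The four functions of the profile whose combination with the balance laws gives the relative
entropy. -/
lemma profiles {p R U : ℝ → ℝ} {KR KU : NNReal} {ρL ρR u1L u1R M : ℝ} (hp : PressureOK p)
    (hR : LipschitzWith KR R) (hU : LipschitzWith KU U) (hpos : ∀ ξ, 0 < R ξ) (hM : 1 ≤ M)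
    (hMR : ∀ ξ, M ≤ ξ → R ξ = ρR ∧ U ξ = u1R) (hML : ∀ ξ, ξ ≤ -M → R ξ = ρL ∧ U ξ = u1L) :
    Profile M (fun ξ => 1 / 2 * U ξ ^ 2 - dH p (R ξ)) (1 / 2 * u1L ^ 2 - dH p ρL)
      (1 / 2 * u1R ^ 2 - dH p ρR) ∧
    Profile M U u1L u1R ∧ Profile M (fun ξ => p (R ξ)) (p ρL) (p ρR) ∧
    Profile M (fun ξ => p (R ξ) * U ξ) (p ρL * u1L) (p ρR * u1R) := by
  have c1 : ∀ ξ, ContDiffAt ℝ 1 (fun q : ℝ × ℝ × ℝ => p q.2.1) (ξ, R ξ, U ξ) := fun ξ =>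
    ContDiffAt.comp (ξ, R ξ, U ξ) (g := p) (hp.contDiffAt (hpos ξ)) (by fun_prop)
  have c2 : ∀ ξ, ContDiffAt ℝ 1 (fun q : ℝ × ℝ × ℝ => dH p q.2.1) (ξ, R ξ, U ξ) := fun ξ =>
    ContDiffAt.comp (ξ, R ξ, U ξ) (g := dH p) (hp.contDiffAt_dH (hpos ξ)) (by fun_prop)
  have c3 : ∀ ξ, ContDiffAt ℝ 1 (fun q : ℝ × ℝ × ℝ => q.2.2) (ξ, R ξ, U ξ) := fun ξ => by
    fun_prop
  have c4 : ∀ ξ, ContDiffAt ℝ 1 (fun q : ℝ × ℝ × ℝ => 1 / 2 * q.2.2 ^ 2) (ξ, R ξ, U ξ) :=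
    fun ξ => by fun_prop
  have mk : ∀ G : ℝ → ℝ → ℝ,
      (∀ ξ, ContDiffAt ℝ 1 (fun q : ℝ × ℝ × ℝ => G q.2.1 q.2.2) (ξ, R ξ, U ξ)) →
      Profile M (fun ξ => G (R ξ) (U ξ)) (G ρL u1L) (G ρR u1R) := by
    intro G hG
    have hl : ∀ ξ ≤ -M, G (R ξ) (U ξ) = G ρL u1L := fun ξ h => by rw [(hML ξ h).1, (hML ξ h).2]
    have hr : ∀ ξ, M ≤ ξ → G (R ξ) (U ξ) = G ρR u1R := fun ξ h => by
      rw [(hMR ξ h).1, (hMR ξ h).2]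
    exact ⟨lipschitz_comp_wave hR hU hG hM hr hl, hl, hr⟩
  exact ⟨mk (fun r v => 1 / 2 * v ^ 2 - dH p r) fun ξ => (c4 ξ).sub (c2 ξ), mk (fun _ v => v) c3,
    mk (fun r _ => p r) c1, mk (fun r v => p r * v) fun ξ => (c1 ξ).mul (c3 ξ)⟩

/-- The combination of the bulk terms of the four balance laws. -/
lemma bulk_eq {p R U : ℝ → ℝ} (hp : PressureOK p) (hpos : ∀ ξ, 0 < R ξ) {t x : ℝ}
    (ht : 0 < t) (h : WavePt p R U (x / t)) (r v : ℝ) :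
    (r * (U (x / t) - v) ^ 2 + (p r - deriv p (R (x / t)) * (r - R (x / t)) - p (R (x / t))))
        * deriv (fun y => U (y / t)) x =
      -(((r * -(deriv (fun ξ => 1 / 2 * U ξ ^ 2 - dH p (R ξ)) (x / t) * (x / t) / t) +
            r * v * (deriv (fun ξ => 1 / 2 * U ξ ^ 2 - dH p (R ξ)) (x / t) / t)) -
          (r * v * -(deriv U (x / t) * (x / t) / t) +
            (r * v ^ 2 + p r) * (deriv U (x / t) / t)) +
          (1 * -(deriv (fun ξ => p (R ξ)) (x / t) * (x / t) / t) +
            0 * (deriv (fun ξ => p (R ξ)) (x / t) / t))) +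
          (0 * -(deriv (fun ξ => p (R ξ) * U ξ) (x / t) * (x / t) / t) +
            1 * (deriv (fun ξ => p (R ξ) * U ξ) (x / t) / t))) := by
  have hy : HasDerivAt (fun y => y / t) (1 / t) x := (hasDerivAt_id _).div_const t
  obtain ⟨R', U', h1, h2, h3, h4, h5⟩ := h
  have hsq := sq_of_ode (hpos _) h4 h5
  have b0 := (h2.comp x hy).deriv
  have b1 := (hp.hasDerivAt (hpos _)).comp _ h1
  have b2 := (((h2.pow 2).const_mul (1 / 2)).sub ((hp.hasDerivAt_dH (hpos _)).comp _ h1)).deriv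
  have b3 := b1.deriv
  have b4 := (b1.mul h2).deriv
  have h6 : deriv p (R (x / t)) / R (x / t) * R' = (x / t - U (x / t)) * U' := by
    have := (hpos (x / t)).ne'
    rw [div_mul_eq_mul_div, h5]
    field_simp
  simp only [Function.comp_def, Pi.sub_def, Pi.mul_def, Pi.pow_def] at b0 b2 b3 b4
  rw [b0, b2, b3, b4, h2.deriv, h6, h5]
  push_cast
  generalize x / t = ξ at *
  linear_combination (r - R ξ) / t * hsq

/-! ### The relative entropy inequality -/

lemma integral_comb {α : Type*} [MeasurableSpace α] {μ : Measure α} {x1 x2 x3 x4 : α → ℝ}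
    (h1 : Integrable x1 μ) (h2 : Integrable x2 μ) (h3 : Integrable x3 μ) (h4 : Integrable x4 μ) :
    Integrable (fun x => x1 x - x2 x + x3 x + x4 x) μ ∧
      ∫ x, (x1 x - x2 x + x3 x + x4 x) ∂μ =
        ∫ x, x1 x ∂μ - ∫ x, x2 x ∂μ + ∫ x, x3 x ∂μ + ∫ x, x4 x ∂μ := by
  refine ⟨((h1.sub h2).add h3).add h4, ?_⟩
  rw [← integral_sub h1 h2]
  have e3 := integral_add (h1.sub h2) h3
  have e4 := integral_add ((h1.sub h2).add h3) h4
  simp only [Pi.add_apply, Pi.sub_apply] at e3 e4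
  rw [e4, e3]

lemma integral_eq_add {α : Type*} [MeasurableSpace α] {μ : Measure α} {e f g k : α → ℝ}
    (hf : Integrable f μ) (hg : Integrable g μ) (hk : Integrable k μ)
    (h : ∀ x, e x = f x - g x + k x) :
    ∫ x, e x ∂μ = ∫ x, f x ∂μ - ∫ x, g x ∂μ + ∫ x, k x ∂μ := by
  have e1 := integral_add (hf.sub hg) hk
  simp only [Pi.sub_apply] at e1
  rw [← integral_sub hf hg, ← e1]
  exact integral_congr_ae (ae_of_all _ h)

lemma iter_eq_neg {a τ : ℝ} (hτ : 0 < τ) {g : ℝ → ℝ × ℝ → ℝ} {G : ℝ × (ℝ × ℝ) → ℝ}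
    (hI : Integrable G (nu a τ)) (h : ∀ᵐ z ∂(nu a τ), g z.1 z.2 = -G z) :
    -(∫ t in (0:ℝ)..τ, ∫ x in Dom a, g t x) = ∫ z, G z ∂(nu a τ) := by
  rw [iter_eq hτ (g' := fun t x => -G (t, x)) h hI.neg, integral_neg, neg_neg]

/-- The energy density is integrable on a time slice where the density is nonnegative. -/
lemma integrable_energy {T a τ : ℝ} {p : ℝ → ℝ} {ρL ρR u1L u1R : ℝ} {ρ : ℝ → ℝ × ℝ → ℝ}
    {u : ℝ → ℝ × ℝ → ℝ × ℝ} (hp : PressureOK p)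
    (hsol : IsAdmissibleWeakSol T a p ρL ρR u1L u1R ρ u)
    (hnn : ∀ᵐ x ∂(volume.restrict (Dom a)), 0 ≤ ρ τ x) :
    Integrable (fun x => 1 / 2 * ρ τ x * dot (u τ x) (u τ x) + Hfun p (ρ τ x))
      (volume.restrict (Dom a)) := by
  obtain ⟨C, hC⟩ := hsol.bdd
  obtain ⟨D, hD⟩ := hp.H_bound C
  have mρ : Measurable (ρ τ) := hsol.meas_ρ.comp (by fun_prop : Measurable (fun x => (τ, x)))
  have mu : Measurable (u τ) := hsol.meas_u.comp (by fun_prop : Measurable (fun x => (τ, x)))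
  have hm : Measurable fun x =>
      1 / 2 * ρ τ x * dot (u τ x) (u τ x) + Hfun p (max (ρ τ x) 0) := by
    have := hp.measurable_H.comp mρ
    simp only [Function.comp_def] at this
    unfold dot
    fun_prop
  refine Integrable.of_bound (hm.aestronglyMeasurable.congr ?_) (1 / 2 * C * (C * C + C * C) + D) ?_
  · filter_upwards [hnn] with x hx
    rw [max_eq_left hx]
  · filter_upwards [hnn] with x hx
    obtain ⟨c1, c2⟩ := hC τ x
    have hC0 : 0 ≤ C := (abs_nonneg _).trans c1
    rw [abs_of_nonneg hx] at c1
    have c3 : |(u τ x).1| ≤ C := (norm_fst_le (u τ x)).trans c2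
    have c4 : |(u τ x).2| ≤ C := (norm_snd_le (u τ x)).trans c2
    have e : 0 ≤ dot (u τ x) (u τ x) := by
      unfold dot; nlinarith [sq_nonneg (u τ x).1, sq_nonneg (u τ x).2]
    have e2 : dot (u τ x) (u τ x) ≤ C * C + C * C := by
      unfold dot
      rw [← abs_mul_abs_self (u τ x).1, ← abs_mul_abs_self (u τ x).2]
      gcongr
    rw [Real.norm_eq_abs]
    refine (abs_add_le _ _).trans (add_le_add ?_ (hD _ hx c1))
    rw [abs_of_nonneg (by positivity)]
    gcongr

lemma integrable_energy0 {a : ℝ} {p : ℝ → ℝ} {ρL ρR u1L u1R : ℝ} :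
    Integrable (fun x => 1 / 2 * riem ρL ρR x * (riem u1L u1R x) ^ 2 + Hfun p (riem ρL ρR x))
      (volume.restrict (Dom a)) := by
  have h : (fun x => 1 / 2 * riem ρL ρR x * (riem u1L u1R x) ^ 2 + Hfun p (riem ρL ρR x)) =
      riem (1 / 2 * ρL * u1L ^ 2 + Hfun p ρL) (1 / 2 * ρR * u1R ^ 2 + Hfun p ρR) := by
    ext x
    unfold riem
    split_ifs <;> rfl
  rw [h]
  exact Integrable.of_bound (measurable_riem _ _).aestronglyMeasurable _
    (ae_of_all _ fun x => abs_riem_le _ _ x)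

/-- The relative entropy is the energy plus the densities of the four balance laws. -/
lemma relEnt_eq {p : ℝ → ℝ} (hp : PressureOK p) {r V : ℝ} (hr : 0 < r) (q : ℝ) (w : ℝ × ℝ) :
    relEnt p q w r (V, 0) = 1 / 2 * q * dot w w + Hfun p q +
      (q * (1 / 2 * V ^ 2 - dH p r) - q * w.1 * V + 1 * p r + 0 * (p r * V)) := by
  unfold relEnt
  rw [hp.deriv_H hr, PressureOK.H_eq (p := p) hr]
  simp only [dot, Prod.fst_sub, Prod.snd_sub]
  ring


/-- Reduced form of the relative entropy inequality (inequality (REI2)): for any bounded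
admissible weak solution `(ρ,u)` of the Riemann problem and the rarefaction-wave solution
`(ρ̃,ũ) = (R(x₁/t), (U(x₁/t),0))`, for a.a. `τ ∈ (0,T)`:
`∫_Ω E(ρ,u | ρ̃,ũ)(τ) dx ≤ − ∫₀^τ∫_Ω [ρ(ũ¹ − u¹)² + (p(ρ) − p'(ρ̃)(ρ − ρ̃) − p(ρ̃))] ∂_{x₁}ũ¹`. -/
theorem reduced_relative_entropy_inequality
    (T a : ℝ) (hT : 0 < T) (ha : 0 < a)
    (p : ℝ → ℝ) (hp : PressureOK p)
    (ρL ρR u1L u1R : ℝ) (hρL : 0 < ρL) (hρR : 0 < ρR)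
    (R U : ℝ → ℝ) (hwave : IsRarefactionWave T p ρL ρR u1L u1R R U)
    (ρ : ℝ → ℝ × ℝ → ℝ) (u : ℝ → ℝ × ℝ → ℝ × ℝ)
    (hsol : IsAdmissibleWeakSol T a p ρL ρR u1L u1R ρ u) :
    ∀ᵐ τ ∂(volume.restrict (Ioo 0 T)),
      (∫ x in Dom a, relEnt p (ρ τ x) (u τ x) (R (x.1 / τ)) (U (x.1 / τ), 0))
      ≤ - ∫ t in (0:ℝ)..τ, ∫ x in Dom a,
          ((ρ t x * (U (x.1 / t) - (u t x).1) ^ 2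
            + (p (ρ t x) - deriv p (R (x.1 / t)) * (ρ t x - R (x.1 / t))
              - p (R (x.1 / t))))
            * deriv (fun y => U (y / t)) x.1) := by
  obtain ⟨KR, hR⟩ := hwave.lipR
  obtain ⟨KU, hU⟩ := hwave.lipU
  obtain ⟨c, hc, hlow⟩ := hwave.lower
  have hpos : ∀ ξ, 0 < R ξ := fun ξ => hc.trans_le (hlow ξ)
  have ode := wave_ae hT hp hwave
  obtain ⟨M, hM, hMR, hML⟩ := wave_far hT hp hwave
  obtain ⟨P1, P2, P3, P4⟩ := profiles hp hR hU hpos hM hMR hML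
  have hnn := hsol.nonneg
  have hnn' := hnn
  rw [Measure.volume_eq_prod, ← Measure.prod_restrict] at hnn'
  filter_upwards [hsol.w1, hsol.w2, hsol.w3, ae_restrict_mem measurableSet_Ioo,
    Measure.ae_ae_of_ae_prod hnn'] with τ w1 w2 w3 hτT hslice
  have hτ : 0 < τ := hτT.1
  have hnu : ∀ᵐ z ∂(nu a τ), 0 ≤ ρ z.1 z.2 := by
    rw [nu, Measure.prod_restrict, ← Measure.volume_eq_prod]
    exact ae_restrict_of_ae_restrict_of_subset
      (Set.prod_mono (Ioc_subset_Ioo_right hτT.2) Subset.rfl) hnn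
  obtain ⟨e1, i1, j1, k1⟩ := (mass_law ha hτ hsol w1).profile ha hτ hM P1
  obtain ⟨e2, i2, j2, k2⟩ := (momentum_law ha hτ hp hsol hnu w2).profile ha hτ hM P2
  obtain ⟨e3, i3, j3, k3⟩ := (time_law ha hτ).profile ha hτ hM P3
  obtain ⟨e4, i4, j4, k4⟩ := (space_law ha hτ).profile ha hτ hM P4
  obtain ⟨I, hI⟩ := integral_comb i1 i2 i3 i4
  obtain ⟨K, hK⟩ := integral_comb k1 k2 k3 k4
  unfold Holds at e1 e2 e3 e4
  have hE := integrable_energy hp hsol hslice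
  have hE0 := integrable_energy0 (a := a) (p := p) (ρL := ρL) (ρR := ρR) (u1L := u1L) (u1R := u1R)
  have hleft := integral_eq_add hE hE0 I (e := fun x =>
    relEnt p (ρ τ x) (u τ x) (R (x.1 / τ)) (U (x.1 / τ), 0)) (by
      intro x
      rw [relEnt_eq hp (hpos _)]
      unfold riem
      split_ifs
      · rw [PressureOK.H_eq (p := p) hρL]; ring
      · rw [PressureOK.H_eq (p := p) hρR]; ring)
  have hright := iter_eq_neg hτ K (g := fun t x =>
    (ρ t x * (U (x.1 / t) - (u t x).1) ^ 2
            + (p (ρ t x) - deriv p (R (x.1 / t)) * (ρ t x - R (x.1 / t))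
              - p (R (x.1 / t))))
            * deriv (fun y => U (y / t)) x.1) (by
      filter_upwards [ae_nu a τ, ae_nu_ratio a τ ode, hnu] with z hz hw hz0
      rw [bulk_eq hp hpos hz.1 hw, max_eq_left hz0])
  -- the boundary terms combine into the entropy flux at `x₁ = ± a`
  have hflux : ∀ t, 0 ≤ t → 0 ≤
      ((1 / 2 * ρR * u1R ^ 2 + Hfun p ρR + p ρR) * u1R
          - (1 / 2 * ρL * u1L ^ 2 + Hfun p ρL + p ρL) * u1L) +
      (ρR * u1R * (1 / 2 * U (a / t) ^ 2 - dH p (R (a / t)))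
          - ρL * u1L * (1 / 2 * U (-a / t) ^ 2 - dH p (R (-a / t)))
        - ((ρR * u1R ^ 2 + p ρR) * U (a / t) - (ρL * u1L ^ 2 + p ρL) * U (-a / t))
        + (0 * p (R (a / t)) - 0 * p (R (-a / t)))
        + (1 * (p (R (a / t)) * U (a / t)) - 1 * (p (R (-a / t)) * U (-a / t)))) := by
    intro t ht
    have f1 := flux_right hp hR hU hpos ode hρR hMR (div_nonneg ha.le ht)
    have f2 := flux_left hp hR hU hpos ode hρL hML
      (div_nonpos_of_nonpos_of_nonneg (neg_nonpos.2 ha.le) ht)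
    unfold cE at f1 f2
    linarith
  have hb := intervalIntegral.integral_nonneg (μ := volume) hτ.le
    fun t (ht : t ∈ Icc 0 τ) => hflux t ht.1
  rw [intervalIntegral.integral_add intervalIntegrable_const (((j1.sub j2).add j3).add j4)] at hb
  rw [intervalIntegrable_iff_integrableOn_Ioc_of_le hτ.le] at j1 j2 j3 j4
  have hJ := (integral_comb j1 j2 j3 j4).2
  simp only [← intervalIntegral.integral_of_le hτ.le] at hJ
  rw [hJ] at hb
  simp only [intervalIntegral.integral_const (a := (0:ℝ)) (b := (1:ℝ)), sub_zero, one_smul] at w3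
  refine hleft.trans_le (le_trans ?_ hright.ge)
  rw [hI, hK]
  linarith
end

section
/- Monotonicity of the velocity in a rarefaction fan: Let p : (0,∞) → ℝ be twice continuously differentiable with p'(ρ) > 0 and p''(ρ) ≥ 0 for all ρ > 0. Let I ⊂ ℝ be an open interval and R, U : I → ℝ be continuously differentiable with R(ξ) > 0 for all ξ ∈ I, satisfying for every ξ ∈ I: (U(ξ) − ξ)² = p'(R(ξ)) and (U(ξ) − ξ)R'(ξ) + R(ξ)U'(ξ) = 0. Then for every ξ ∈ I, U'(ξ) = 2p'(R(ξ)) / (2p'(R(ξ)) + R(ξ)p''(R(ξ))) > 0; in particular U is strictly increasing on I. -/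
open Set

/-! Differentiating the characteristic relation gives `2 (U - ξ) (U' - 1) = p''(R) R'`.
Multiplying by `U - ξ`, replacing `(U - ξ)²` by `p'(R)` and `(U - ξ) R'` by `-R U'`, one gets
`U' (2 p'(R) + R p''(R)) = 2 p'(R)`, where the coefficient of `U'` and the right-hand side are
positive. No sign of `U - ξ` has to be chosen. -/

/-- Monotonicity of the velocity in a rarefaction fan: if on an open interval `I` the
characteristic relation `(U(ξ) − ξ)² = p'(R(ξ))` and the continuity relation
`(U(ξ) − ξ)R' + RU' = 0` hold, with `p ∈ C²`, `p' > 0`, `p'' ≥ 0` and `R > 0`,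
then `U'(ξ) = 2p'(R(ξ))/(2p'(R(ξ)) + R(ξ)p''(R(ξ))) > 0` on `I`; in particular `U` is
strictly increasing on `I`. -/
theorem rarefaction_velocity_monotone (p : ℝ → ℝ) (hp : ContDiffOn ℝ 2 p (Set.Ioi 0))
    (hp' : ∀ s : ℝ, 0 < s → 0 < deriv p s) (hp'' : ∀ s : ℝ, 0 < s → 0 ≤ deriv (deriv p) s)
    (α β : ℝ) (R U : ℝ → ℝ)
    (hR : ∀ ξ ∈ Set.Ioo α β, DifferentiableAt ℝ R ξ)
    (hU : ∀ ξ ∈ Set.Ioo α β, DifferentiableAt ℝ U ξ)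
    (hRc : ContinuousOn (deriv R) (Set.Ioo α β))
    (hUc : ContinuousOn (deriv U) (Set.Ioo α β))
    (hRpos : ∀ ξ ∈ Set.Ioo α β, 0 < R ξ)
    (hchar : ∀ ξ ∈ Set.Ioo α β, (U ξ - ξ) ^ 2 = deriv p (R ξ))
    (hcont : ∀ ξ ∈ Set.Ioo α β, (U ξ - ξ) * deriv R ξ + R ξ * deriv U ξ = 0) :
    (∀ ξ ∈ Set.Ioo α β,
        deriv U ξ = 2 * deriv p (R ξ) / (2 * deriv p (R ξ) + R ξ * deriv (deriv p) (R ξ)) ∧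
          0 < deriv U ξ) ∧
      StrictMonoOn U (Set.Ioo α β) := by
  have key : ∀ ξ ∈ Set.Ioo α β,
      deriv U ξ = 2 * deriv p (R ξ) / (2 * deriv p (R ξ) + R ξ * deriv (deriv p) (R ξ)) ∧
        0 < deriv U ξ := by
    intro ξ hξ
    have hr := hRpos ξ hξ
    have hp1 := hp' _ hr
    have hp2 := hp'' _ hr
    have hpd : DifferentiableAt ℝ (deriv p) (R ξ) :=
      ((hp.deriv_of_isOpen (m := 1) isOpen_Ioi (by norm_num)).differentiableOn
        (by norm_num)).differentiableAt (Ioi_mem_nhds hr)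
    have hleft : HasDerivAt (fun x => (U x - x) ^ 2) (2 * (U ξ - ξ) * (deriv U ξ - 1)) ξ := by
      simpa using ((hU ξ hξ).hasDerivAt.fun_sub (hasDerivAt_id' ξ)).fun_pow 2
    have hright : HasDerivAt (fun x => deriv p (R x))
        (deriv (deriv p) (R ξ) * deriv R ξ) ξ :=
      hpd.hasDerivAt.comp ξ (hR ξ hξ).hasDerivAt
    have heq : (fun x => (U x - x) ^ 2) =ᶠ[nhds ξ] fun x => deriv p (R x) := by
      filter_upwards [isOpen_Ioo.mem_nhds hξ] with x hx using hchar x hx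
    have hdiff := hleft.unique (hright.congr_of_eventuallyEq heq)
    have hden : 0 < 2 * deriv p (R ξ) + R ξ * deriv (deriv p) (R ξ) := by positivity
    have hform : deriv U ξ =
        2 * deriv p (R ξ) / (2 * deriv p (R ξ) + R ξ * deriv (deriv p) (R ξ)) := by
      rw [eq_div_iff hden.ne']
      linear_combination (U ξ - ξ) * hdiff + deriv (deriv p) (R ξ) * hcont ξ hξ
        - 2 * (deriv U ξ - 1) * hchar ξ hξ
    exact ⟨hform, hform ▸ by positivity⟩
  refine ⟨key, strictMonoOn_of_deriv_pos (convex_Ioo α β)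
    (fun x hx => (hU x hx).continuousAt.continuousWithinAt) fun x hx => ?_⟩
  rw [interior_Ioo] at hx
  exact (key x hx).2
end
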